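/- arXiv:0908.4024 — 6 statements merged into one kernel-verified Lean document; each statement's English description precedes it below -/
import Mathlib

section
/- Let m and n be positive integers with n > m, and let (a_{k,l}) be an m × n matrix with rational integer entries. Let A be a positive integer such that |a_{k,l}| ≤ A for all 1 ≤ k ≤ m, 1 ≤ l ≤ n. Then the system of homogeneous linear equations a_{k,1} x_1 + ⋯ + a_{k,n} x_n = 0 (1 ≤ k ≤ m) has a solution in rational integers x_1, …, x_n, not all zero, satisfying |x_j| < 1 + (nA)^{m/(n−m)} for all 1 ≤ j ≤ n. -/
open Matrix Fintype in
open scoped Matrix.Norms.Elementwise in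
theorem thue_siegel_lemma_general {α β : Type*} [Fintype α] [Fintype β]
    (hα : 0 < card α) (hαβ : card α < card β)
    (a : Matrix α β ℤ) {C : ℝ} (hC : 1 ≤ C) (ha : ∀ i j, |(a i j : ℝ)| ≤ C) :
    ∃ x : β → ℤ, x ≠ 0 ∧ a *ᵥ x = 0 ∧
      ∀ j, |(x j : ℝ)| ≤ (card β * C) ^ ((card α : ℝ) / (card β - card α)) := by
  obtain ⟨x, hx, hax, hnorm⟩ := Int.Matrix.exists_ne_zero_int_vec_norm_le a hαβ hα
  refine ⟨x, hx, hax, fun j ↦ ?_⟩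
  have max_norm_le : max 1 ‖a‖ ≤ C :=
    max_le hC <| (norm_le_iff (zero_le_one.trans hC)).2 fun i j ↦
      (Int.norm_eq_abs (a i j)).trans_le (ha i j)
  have exponent_nonneg : 0 ≤ (card α : ℝ) / (card β - card α) :=
    div_nonneg (Nat.cast_nonneg _) (sub_nonneg.2 (Nat.cast_le.2 hαβ.le))
  calc |(x j : ℝ)| = ‖x j‖ := (Int.norm_eq_abs (x j)).symm
    _ ≤ ‖x‖ := norm_le_pi_norm x j
    _ ≤ (card β * max 1 ‖a‖) ^ ((card α : ℝ) / (card β - card α)) := hnorm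
    _ ≤ (card β * C) ^ ((card α : ℝ) / (card β - card α)) := by gcongr

/-- **Thue–Siegel Lemma.** A homogeneous system of `m` linear equations with
rational integer coefficients bounded by `A`, in `n > m` unknowns, has a
nontrivial integer solution with `|x j| < 1 + (n A)^{m/(n-m)}`. -/
theorem thue_siegel_lemma
    (m n : ℕ) (hm : 0 < m) (hmn : m < n)
    (a : Fin m → Fin n → ℤ) (A : ℕ) (hA : 0 < A)
    (hbound : ∀ k l, |a k l| ≤ (A : ℤ)) :
    ∃ x : Fin n → ℤ, x ≠ 0 ∧ (∀ k, ∑ l, a k l * x l = 0) ∧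
      ∀ j, (|x j| : ℝ) < 1 + ((n * A : ℕ) : ℝ) ^ ((m : ℝ) / ((n : ℝ) - (m : ℝ))) := by
  obtain ⟨x, hx, hax, hle⟩ := thue_siegel_lemma_general (by simpa using hm) (by simpa using hmn)
    (Matrix.of a) (Nat.one_le_cast.2 hA) (fun k l ↦ mod_cast hbound k l)
  exact ⟨x, hx, congrFun hax, fun j ↦ (lt_one_add _).trans_le' (by simpa using hle j)⟩
end

section
/- Let n ≥ 1 and let S be a nonempty finite subset of ℂ^n. For each integer t ≥ 1 let ω_t(S) denote the smallest total degree of a nonzero polynomial P ∈ ℂ[z_1, …, z_n] having a zero of multiplicity at least t at every point of S. Then the sequence ω_t(S)/t converges as t → ∞ to a limit Ω(S), and for every t ≥ 1 one has ω_t(S)/(t + n − 1) ≤ Ω(S) ≤ ω_t(S)/t ≤ ω_1(S). -/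
/-- `f : ℂ^n → ℂ` has a zero of multiplicity at least `t` at `w`: all derivatives
of total order strictly less than `t` vanish at `w`. -/
def HasZeroOfMult (n : ℕ) (f : (Fin n → ℂ) → ℂ) (w : Fin n → ℂ) (t : ℕ) : Prop :=
  ∀ k < t, iteratedFDeriv ℂ k f w = 0

/-- `ω_t(S)`: the smallest total degree of a nonzero polynomial having a zero of
multiplicity at least `t` at every point of `S`. -/
noncomputable def omegaT (n : ℕ) (S : Set (Fin n → ℂ)) (t : ℕ) : ℕ :=
  sInf {D : ℕ | ∃ P : MvPolynomial (Fin n) ℂ, P ≠ 0 ∧ P.totalDegree = D ∧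
    ∀ w ∈ S, HasZeroOfMult n (fun z => MvPolynomial.eval z P) w t}

/-!
Write `I_S^(t)` for the ideal of polynomials with zeros of multiplicity at least `t` along `S` and
`α` for the least degree of a nonzero element, so that `ω_t = α(I_S^(t))`. Products show that `α`
is subadditive in `t`, and Fekete's lemma gives the limit and the two upper bounds.

The lower bound comes from reduction to characteristic `p`. That no nonzero polynomial of degree
`< ω_t` vanishes to order `t` is witnessed by a nonzero minor of a matrix of Taylor coefficients.
Choose a valuation ring with residue characteristic `p > 0` that contains the coordinates of the
points occurring in the minor and the inverse of the minor: after reduction the minor still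
witnesses the bound `ω_t`, while a polynomial in `I_S^((t+n-1)q)`, `q = p ^ e`, rescaled to be
primitive, reduces to a nonzero one of no larger degree. For the ideal `𝔪` of a point the
pigeonhole principle gives `𝔪^((t+n-1)q) ⊆ (𝔪^t)^[q]`, and a Cartier operator maps `J^[q]` into `J`
while dividing degrees by `q`. Hence `q ω_t ≤ ω_{(t+n-1)q}`; divide by `(t+n-1)q` and let `e → ∞`.
-/

open MvPolynomial
open scoped Matrix

lemma totalDegree_le_iff_degree_le {σ R : Type*} [CommSemiring R] {f : MvPolynomial σ R} {d : ℕ} :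
    f.totalDegree ≤ d ↔ ∀ m ∈ f.support, m.degree ≤ d :=
  Finset.sup_le_iff

section PointIdeal

variable {σ R : Type*} [CommRing R]

/-- The automorphism `f(z) ↦ f(z + w)` of the polynomial ring; the coefficients of
`recenter w f` are the Taylor coefficients of `f` at `w`. -/
noncomputable def recenter (w : σ → R) : MvPolynomial σ R ≃ₐ[R] MvPolynomial σ R :=
  AlgEquiv.ofAlgHom (aeval fun i => X i + C (w i)) (aeval fun i => X i - C (w i))
    (by ext i : 1; simp) (by ext i : 1; simp)

@[simp]
lemma recenter_X (w : σ → R) (i : σ) : recenter w (X i) = X i + C (w i) :=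
  aeval_X _ i

@[simp]
lemma recenter_C (w : σ → R) (a : R) : recenter w (C a) = C a :=
  (recenter w).commutes a

lemma map_recenter {R' : Type*} [CommRing R'] (φ : R →+* R') (w : σ → R)
    (f : MvPolynomial σ R) : map φ (recenter w f) = recenter (φ ∘ w) (map φ f) := by
  induction f using MvPolynomial.induction_on with
  | C a => simp
  | add f g hf hg => simp only [map_add, hf, hg]
  | mul_X f i hf => simp [hf]

lemma eval_recenter (w z : σ → R) (f : MvPolynomial σ R) :
    eval z (recenter w f) = eval (z + w) f := by
  induction f using MvPolynomial.induction_on with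
  | C a => simp
  | add f g hf hg => simp only [map_add, hf, hg]
  | mul_X f i hf => simp [hf]

/-- The ideal generated by the `z_i - w_i`, that is, the ideal of the point `w`. Its `t`-th power
consists of the polynomials with a zero of multiplicity at least `t` at `w`. -/
noncomputable def pointIdeal (w : σ → R) : Ideal (MvPolynomial σ R) :=
  Ideal.span (Set.range fun i => X i - C (w i))

lemma map_recenter_pointIdeal (w : σ → R) :
    (pointIdeal w).map (recenter w) = idealOfVars σ R := by
  simp only [pointIdeal, Ideal.map_span, ← Set.range_comp, Function.comp_def, map_sub, recenter_X,
    recenter_C, add_sub_cancel_right]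

lemma mem_pointIdeal_pow_iff {w : σ → R} {t : ℕ} {f : MvPolynomial σ R} :
    f ∈ pointIdeal w ^ t ↔ ∀ k : σ →₀ ℕ, k.degree < t → coeff k (recenter w f) = 0 := by
  rw [← mem_pow_idealOfVars_iff', ← map_recenter_pointIdeal w, ← Ideal.map_pow]
  exact ⟨Ideal.mem_map_of_mem _, fun h => by
    obtain ⟨g, hg, hgf⟩ := (Ideal.mem_map_of_equiv (recenter w) _).1 h
    rwa [← (recenter w).injective hgf]⟩

lemma mem_pointIdeal_iff {w : σ → R} {f : MvPolynomial σ R} :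
    f ∈ pointIdeal w ↔ eval w f = 0 := by
  rw [← pow_one (pointIdeal w), mem_pointIdeal_pow_iff]
  simp only [Nat.lt_one_iff, Finsupp.degree_eq_zero_iff, forall_eq, ← constantCoeff_eq,
    ← eval_zero, eval_recenter, zero_add]

/-- The ideal of the fat point scheme `t · S`: the polynomials with a zero of multiplicity at
least `t` at every point of `S`. -/
noncomputable def fatPointIdeal (S : Set (σ → R)) (t : ℕ) : Ideal (MvPolynomial σ R) :=
  ⨅ w ∈ S, pointIdeal w ^ t

lemma mem_fatPointIdeal {S : Set (σ → R)} {t : ℕ} {f : MvPolynomial σ R} :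
    f ∈ fatPointIdeal S t ↔ ∀ w ∈ S, f ∈ pointIdeal w ^ t := by
  simp only [fatPointIdeal, Submodule.mem_iInf]

lemma fatPointIdeal_anti {S S' : Set (σ → R)} (h : S ⊆ S') (t : ℕ) :
    fatPointIdeal S' t ≤ fatPointIdeal S t :=
  biInf_mono h

lemma fatPointIdeal_mul_le (S : Set (σ → R)) (s t : ℕ) :
    fatPointIdeal S s * fatPointIdeal S t ≤ fatPointIdeal S (s + t) :=
  le_iInf₂ fun w hw => pow_add (pointIdeal w) s t ▸
    Ideal.mul_mono (iInf₂_le w hw) (iInf₂_le w hw)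

lemma mem_fatPointIdeal_range_iff {ι : Type*} {w : ι → σ → R} {t : ℕ} {f : MvPolynomial σ R} :
    f ∈ fatPointIdeal (Set.range w) t ↔
      ∀ i, ∀ k : σ →₀ ℕ, k.degree < t → coeff k (recenter (w i) f) = 0 := by
  simp only [mem_fatPointIdeal, Set.forall_mem_range, mem_pointIdeal_pow_iff]

lemma fatPointIdeal_ne_bot {K : Type*} [Field K] {S : Set (σ → K)} (hS : vanishingIdeal K S ≠ ⊥)
    (t : ℕ) : fatPointIdeal S t ≠ ⊥ := by
  obtain ⟨f, hf, hf0⟩ := Submodule.exists_mem_ne_zero_of_ne_bot hS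
  refine (Submodule.ne_bot_iff _).2 ⟨f ^ t, mem_fatPointIdeal.2 fun w hw => ?_, pow_ne_zero t hf0⟩
  exact Ideal.pow_mem_pow (mem_pointIdeal_iff.2 (mem_vanishingIdeal_iff.1 hf w hw)) t

lemma vanishingIdeal_ne_bot_of_finite [Nonempty σ] {K : Type*} [Field K] {S : Set (σ → K)}
    (hS : S.Finite) : vanishingIdeal K S ≠ ⊥ := by
  obtain ⟨i⟩ := ‹Nonempty σ›
  refine (Submodule.ne_bot_iff _).2 ⟨∏ w ∈ hS.toFinset, (X i - C (w i)), ?_, ?_⟩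
  · refine mem_vanishingIdeal_iff.2 fun w hw => ?_
    rw [map_prod]
    exact Finset.prod_eq_zero (hS.mem_toFinset.2 hw) (by simp)
  · refine Finset.prod_ne_zero_iff.2 fun w _ h => ?_
    simpa using congrArg (eval fun _ => w i + 1) h

end PointIdeal

section MinDegree

variable {σ R : Type*} [CommRing R]

/-- The smallest total degree of a nonzero element of `I`, often written `α(I)`; it is `0` for
`I = ⊥`. -/
noncomputable def minDegree (I : Ideal (MvPolynomial σ R)) : ℕ :=
  sInf (totalDegree '' {f | f ∈ I ∧ f ≠ 0})

lemma minDegree_le {I : Ideal (MvPolynomial σ R)} {f : MvPolynomial σ R} (hf : f ∈ I)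
    (hf0 : f ≠ 0) : minDegree I ≤ f.totalDegree :=
  Nat.sInf_le ⟨f, ⟨hf, hf0⟩, rfl⟩

lemma exists_totalDegree_eq_minDegree {I : Ideal (MvPolynomial σ R)} (hI : I ≠ ⊥) :
    ∃ f ∈ I, f ≠ 0 ∧ f.totalDegree = minDegree I := by
  obtain ⟨f, hf, hf0⟩ := Submodule.exists_mem_ne_zero_of_ne_bot hI
  obtain ⟨g, ⟨hg, hg0⟩, hgd⟩ :=
    Nat.sInf_mem (s := totalDegree '' {f | f ∈ I ∧ f ≠ 0}) ⟨_, f, ⟨hf, hf0⟩, rfl⟩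
  exact ⟨g, hg, hg0, hgd⟩

lemma minDegree_le_add_of_mul_le [IsDomain R] {I J L : Ideal (MvPolynomial σ R)} (hI : I ≠ ⊥)
    (hJ : J ≠ ⊥) (h : I * J ≤ L) : minDegree L ≤ minDegree I + minDegree J := by
  obtain ⟨f, hf, hf0, hfd⟩ := exists_totalDegree_eq_minDegree hI
  obtain ⟨g, hg, hg0, hgd⟩ := exists_totalDegree_eq_minDegree hJ
  calc minDegree L ≤ (f * g).totalDegree :=
        minDegree_le (h (Ideal.mul_mem_mul hf hg)) (mul_ne_zero hf0 hg0)
    _ ≤ minDegree I + minDegree J := hfd ▸ hgd ▸ totalDegree_mul f g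

lemma subadditive_minDegree_fatPointIdeal {K : Type*} [Field K] {S : Set (σ → K)}
    (hS : vanishingIdeal K S ≠ ⊥) :
    Subadditive fun t => (minDegree (fatPointIdeal S t) : ℝ) := fun s t => by
  beta_reduce
  exact_mod_cast minDegree_le_add_of_mul_le (fatPointIdeal_ne_bot hS s)
    (fatPointIdeal_ne_bot hS t) (fatPointIdeal_mul_le S s t)

end MinDegree

section IteratedFDeriv

lemma mem_idealOfVars_pow_succ_iff_pderiv {σ R : Type*} [CommRing R] [IsDomain R] [CharZero R]
    {t : ℕ} {f : MvPolynomial σ R} :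
    f ∈ idealOfVars σ R ^ (t + 1) ↔
      coeff 0 f = 0 ∧ ∀ i, pderiv i f ∈ idealOfVars σ R ^ t := by
  simp only [mem_pow_idealOfVars_iff']
  refine ⟨fun h => ⟨h 0 (by simp), fun i k hk => ?_⟩, fun ⟨h0, h⟩ k hk => ?_⟩
  · rw [coeff_pderiv, h _ (by simpa using hk), zero_mul]
  · rcases eq_or_ne k 0 with rfl | hk0
    · exact h0
    · obtain ⟨i, hi⟩ := Finsupp.ne_iff.1 hk0
      obtain ⟨m, rfl⟩ := exists_add_of_le (Finsupp.single_le_iff.2 (Nat.one_le_iff_ne_zero.2 hi))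
      have hm : m.degree < t := by simpa [Nat.one_add_le_iff] using hk
      have hcoeff := h i m hm
      rw [coeff_pderiv, add_comm] at hcoeff
      exact (mul_eq_zero.1 hcoeff).resolve_right (Nat.cast_add_one_ne_zero (m i))

variable {σ 𝕜 : Type*} [Fintype σ] [NontriviallyNormedField 𝕜]

lemma hasFDerivAt_eval (f : MvPolynomial σ 𝕜) (z : σ → 𝕜) :
    HasFDerivAt (fun z => eval z f)
      (∑ i, eval z (pderiv i f) • ContinuousLinearMap.proj (R := 𝕜) (φ := fun _ : σ => 𝕜) i) z := by
  classical
  induction f using MvPolynomial.induction_on with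
  | C a =>
    simp only [eval_C]
    refine (hasFDerivAt_const a z).congr_fderiv ?_
    ext v
    simp
  | add f g hf hg =>
    simp only [map_add]
    refine (hf.fun_add hg).congr_fderiv ?_
    ext v
    simp [add_mul, Finset.sum_add_distrib]
  | mul_X f j hf =>
    have hX : HasFDerivAt (fun z : σ → 𝕜 => z j) (ContinuousLinearMap.proj j) z :=
      hasFDerivAt_apply (𝕜 := 𝕜) j z
    simp only [map_mul, eval_X]
    refine (hf.fun_mul hX).congr_fderiv ?_
    ext v
    simp [pderiv_X, Pi.single_apply, apply_ite, add_mul, Finset.sum_add_distrib, Finset.mul_sum,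
      mul_assoc]

variable [CompleteSpace 𝕜]

lemma contDiff_eval (f : MvPolynomial σ 𝕜) {N : WithTop ℕ∞} :
    ContDiff 𝕜 N fun z : σ → 𝕜 => eval z f :=
  (AnalyticOnNhd.eval_mvPolynomial f).contDiff

lemma iteratedFDeriv_succ_eval_eq_zero_iff {f : MvPolynomial σ 𝕜} {w : σ → 𝕜} {k : ℕ} :
    iteratedFDeriv 𝕜 (k + 1) (fun z => eval z f) w = 0 ↔
      ∀ i, iteratedFDeriv 𝕜 k (fun z => eval z (pderiv i f)) w = 0 := by
  classical
  have hfderiv : fderiv 𝕜 (fun z => eval z f) = fun z =>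
      ∑ i, eval z (pderiv i f) • ContinuousLinearMap.proj (R := 𝕜) (φ := fun _ : σ => 𝕜) i :=
    funext fun z => (hasFDerivAt_eval f z).fderiv
  rw [← norm_eq_zero, ← norm_iteratedFDeriv_fderiv, norm_eq_zero]
  constructor
  · intro h i
    have hpderiv : (fun z => eval z (pderiv i f)) =
        ContinuousLinearMap.apply 𝕜 𝕜 (Pi.single i 1) ∘ fderiv 𝕜 (fun z => eval z f) := by
      funext z
      simp [hfderiv, Pi.single_apply]
    rw [hpderiv, ContinuousLinearMap.iteratedFDeriv_comp_left (n := k) _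
      ((contDiff_eval f (N := k + 1)).fderiv_right le_rfl).contDiffAt le_rfl, h]
    ext
    simp
  · intro h
    rw [hfderiv, iteratedFDeriv_fun_sum_apply fun i _ =>
      ((contDiff_eval (pderiv i f)).fun_smul contDiff_const).contDiffAt]
    refine Finset.sum_eq_zero fun i _ => ?_
    rw [iteratedFDeriv_smul_const_apply (contDiff_eval _).contDiffAt, h i]
    ext
    simp

variable [CharZero 𝕜]

lemma forall_iteratedFDeriv_eval_zero_iff {t : ℕ} {f : MvPolynomial σ 𝕜} :
    (∀ k < t, iteratedFDeriv 𝕜 k (fun z => eval z f) 0 = 0) ↔ f ∈ idealOfVars σ 𝕜 ^ t := by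
  induction t generalizing f with
  | zero => simp
  | succ t ih =>
    have hzero : iteratedFDeriv 𝕜 0 (fun z => eval z f) 0 = 0 ↔ coeff 0 f = 0 := by
      rw [← norm_eq_zero, norm_iteratedFDeriv_zero, norm_eq_zero, eval_zero, constantCoeff_eq]
    simp only [mem_idealOfVars_pow_succ_iff_pderiv, ← ih, ← hzero, Nat.forall_lt_succ_left,
      iteratedFDeriv_succ_eval_eq_zero_iff]
    tauto

lemma forall_iteratedFDeriv_eval_iff_mem_pointIdeal_pow {t : ℕ} {f : MvPolynomial σ 𝕜}
    {w : σ → 𝕜} :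
    (∀ k < t, iteratedFDeriv 𝕜 k (fun z => eval z f) w = 0) ↔ f ∈ pointIdeal w ^ t := by
  rw [mem_pointIdeal_pow_iff, ← mem_pow_idealOfVars_iff', ← forall_iteratedFDeriv_eval_zero_iff]
  simp only [eval_recenter, iteratedFDeriv_comp_add_right (f := fun z => eval z f), zero_add]

end IteratedFDeriv

lemma omegaT_eq_minDegree_fatPointIdeal (n : ℕ) (S : Set (Fin n → ℂ)) (t : ℕ) :
    omegaT n S t = minDegree (fatPointIdeal S t) := by
  rw [omegaT, minDegree]
  congr 1
  ext D
  simp only [HasZeroOfMult, forall_iteratedFDeriv_eval_iff_mem_pointIdeal_pow,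
    ← mem_fatPointIdeal, Set.mem_image, Set.mem_ofPred_eq]
  tauto

section FrobeniusPower

lemma le_sum_div_of_mul_le_sum {ι : Type*} [Fintype ι] [Nonempty ι] {q t : ℕ} (hq : 0 < q)
    {m : ι → ℕ} (h : (t + Fintype.card ι - 1) * q ≤ ∑ i, m i) : t ≤ ∑ i, m i / q := by
  have hlt : (t + Fintype.card ι - 1) * q < (∑ i, m i / q + Fintype.card ι) * q :=
    calc (t + Fintype.card ι - 1) * q ≤ ∑ i, m i := h
      _ < ∑ i, (m i / q + 1) * q :=
        Finset.sum_lt_sum_of_nonempty Finset.univ_nonempty fun i _ =>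
          Nat.lt_mul_of_div_lt (Nat.lt_succ_self _) hq
      _ = (∑ i, m i / q + Fintype.card ι) * q := by
        simp [← Finset.sum_mul, Finset.sum_add_distrib]
  have := Nat.lt_of_mul_lt_mul_right hlt
  omega

variable {R : Type*} [CommRing R]

lemma prod_pow_mem_span_range_pow {ι : Type*} [Fintype ι] (x : ι → R) {t : ℕ} {c : ι → ℕ}
    (h : t ≤ ∑ i, c i) : ∏ i, x i ^ c i ∈ Ideal.span (Set.range x) ^ t := by
  refine Ideal.pow_le_pow_right h ?_
  rw [← Finset.prod_pow_eq_pow_sum]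
  exact Ideal.prod_mem_prod fun i _ =>
    Ideal.pow_mem_pow (Ideal.subset_span (Set.mem_range_self i)) (c i)

lemma span_range_pow_le_span_image_pow {ι : Type*} [Fintype ι] [Nonempty ι] (x : ι → R) (t : ℕ)
    {q : ℕ} (hq : 0 < q) :
    Ideal.span (Set.range x) ^ ((t + Fintype.card ι - 1) * q) ≤
      Ideal.span ((· ^ q) '' (Ideal.span (Set.range x) ^ t : Ideal R)) := by
  intro y hy
  obtain ⟨P, hP, rfl⟩ := (Ideal.mem_span_pow_iff_exists_isHomogeneous x y).1 hy
  rw [eval_eq']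
  refine Ideal.sum_mem _ fun m hm => Ideal.mul_mem_left _ _ ?_
  have hdeg : ∑ i, m i = (t + Fintype.card ι - 1) * q := by
    rw [← Finsupp.degree_eq_sum, Finsupp.degree_eq_weight_one]
    exact hP (mem_support_iff.1 hm)
  have hsplit : ∏ i, x i ^ m i = (∏ i, x i ^ (m i % q)) * (∏ i, x i ^ (m i / q)) ^ q := by
    simp only [← Finset.prod_pow, ← Finset.prod_mul_distrib, ← pow_mul, ← pow_add,
      Nat.mod_add_div']
  rw [hsplit]
  exact Ideal.mul_mem_left _ _ (Ideal.subset_span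
    ⟨_, prod_pow_mem_span_range_pow x (le_sum_div_of_mul_le_sum hq hdeg.ge), rfl⟩)

end FrobeniusPower

section Contract

variable {σ R : Type*} [CommRing R] {q : ℕ}

/-- Keeps the monomials `z ^ (q • m + a)` of a polynomial and turns them into `z ^ m`. For
`a = 0` this is a left inverse of `MvPolynomial.expand q`. -/
noncomputable def contract (hq : 0 < q) (a : σ →₀ ℕ) : MvPolynomial σ R →+ MvPolynomial σ R :=
  AddMonoidAlgebra.comapDomainAddMonoidHom (fun m => q • m + a)
    ((add_left_injective a).comp (nsmul_right_injective hq.ne'))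

@[simp]
lemma coeff_contract (hq : 0 < q) (a m : σ →₀ ℕ) (f : MvPolynomial σ R) :
    coeff m (contract hq a f) = coeff (q • m + a) f :=
  rfl

lemma contract_expand_mul (hq : 0 < q) {a : σ →₀ ℕ} (ha : ∀ i, a i < q)
    (u f : MvPolynomial σ R) : contract hq a (expand q u * f) = u * contract hq a f := by
  classical
  induction u using MvPolynomial.induction_on' with
  | add u v hu hv => simp only [map_add, add_mul, hu, hv]
  | monomial s c =>
    ext m
    have hle : q • s ≤ q • m + a ↔ s ≤ m := by
      refine forall_congr' fun i => ?_
      simp only [Finsupp.add_apply, Finsupp.smul_apply, smul_eq_mul]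
      rw [mul_comm q (s i), ← Nat.le_div_iff_mul_le hq, Nat.mul_add_div hq,
        Nat.div_eq_of_lt (ha i), add_zero]
    simp only [expand_monomial, coeff_contract, coeff_monomial_mul', hle]
    split_ifs with hsm
    · have hsub : q • (m - s) + a = q • m + a - q • s := by
        obtain ⟨d, rfl⟩ := exists_add_of_le hsm
        simp only [smul_add, add_assoc, add_tsub_cancel_left]
      rw [hsub]
    · rfl

lemma mul_totalDegree_contract_le (hq : 0 < q) (a : σ →₀ ℕ) (f : MvPolynomial σ R) :
    q * (contract hq a f).totalDegree ≤ f.totalDegree := by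
  rw [mul_comm, ← Nat.le_div_iff_mul_le hq, totalDegree_le_iff_degree_le]
  intro m hm
  rw [Nat.le_div_iff_mul_le hq]
  rw [mem_support_iff, coeff_contract, ← mem_support_iff] at hm
  calc m.degree * q ≤ (q • m + a).degree := by simp [mul_comm]
    _ ≤ f.totalDegree := le_totalDegree hm

lemma exists_contract_ne_zero (hq : 0 < q) {f : MvPolynomial σ R} (hf : f ≠ 0) :
    ∃ a : σ →₀ ℕ, (∀ i, a i < q) ∧ contract hq a f ≠ 0 := by
  obtain ⟨m, hm⟩ := ne_zero_iff.1 hf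
  refine ⟨m.mapRange (· % q) (Nat.zero_mod q), fun i => Nat.mod_lt _ hq,
    ne_zero_iff.2 ⟨m.mapRange (· / q) (Nat.zero_div q), ?_⟩⟩
  have hdivmod :
      q • m.mapRange (· / q) (Nat.zero_div q) + m.mapRange (· % q) (Nat.zero_mod q) = m := by
    ext i
    simp [Nat.div_add_mod]
  rwa [coeff_contract, hdivmod]

end Contract

section Cartier

variable {σ R : Type*} [CommRing R] (p e : ℕ) [ExpChar R p]

lemma expand_map_iterateFrobenius (u : MvPolynomial σ R) :
    expand (p ^ e) (map (iterateFrobenius R p e) u) = u ^ p ^ e := by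
  induction u using MvPolynomial.induction_on' with
  | add u v hu hv => simp only [map_add, hu, hv, add_pow_expChar_pow]
  | monomial s c => simp [map_monomial, expand_monomial, monomial_pow, iterateFrobenius_def]

variable [PerfectRing R p]

/-- The Cartier operator of order `q = p ^ e`: the coordinate of `f` on the basis monomial `z ^ a`
of the polynomial ring as a module over its `q`-th powers, with a `q`-th root taken. -/
noncomputable def cartier (a : σ →₀ ℕ) : MvPolynomial σ R →+ MvPolynomial σ R :=
  (map (iterateFrobeniusEquiv R p e).symm.toRingHom).toAddMonoidHom.comp
    (contract (expChar_pow_pos R p e) a)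

variable {p e}

lemma cartier_pow_mul {a : σ →₀ ℕ} (ha : ∀ i, a i < p ^ e) (u f : MvPolynomial σ R) :
    cartier p e a (u ^ p ^ e * f) = u * cartier p e a f := by
  have hroot : (iterateFrobeniusEquiv R p e).symm.toRingHom.comp (iterateFrobenius R p e) =
      RingHom.id R := RingHom.ext (iterateFrobeniusEquiv R p e).symm_apply_apply
  simp only [cartier, AddMonoidHom.comp_apply, RingHom.toAddMonoidHom_eq_coe, AddMonoidHom.coe_coe,
    ← expand_map_iterateFrobenius, contract_expand_mul _ ha, map_mul, map_map, hroot, map_id]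

lemma cartier_mem_of_mem_span_image_pow {a : σ →₀ ℕ} (ha : ∀ i, a i < p ^ e)
    {J : Ideal (MvPolynomial σ R)} {f : MvPolynomial σ R}
    (hf : f ∈ Ideal.span ((· ^ p ^ e) '' (J : Set (MvPolynomial σ R)))) :
    cartier p e a f ∈ J := by
  suffices ∀ h, cartier p e a (h * f) ∈ J by simpa using this 1
  induction hf using Submodule.span_induction with
  | mem f hf =>
    obtain ⟨u, hu, rfl⟩ := hf
    intro h
    rw [mul_comm, cartier_pow_mul ha]
    exact J.mul_mem_right _ hu
  | zero => simp
  | add f g _ _ hf hg =>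
    intro h
    rw [mul_add, map_add]
    exact J.add_mem (hf h) (hg h)
  | smul b f _ hf =>
    intro h
    rw [smul_eq_mul, ← mul_assoc]
    exact hf (h * b)

lemma mul_totalDegree_cartier_le (a : σ →₀ ℕ) (f : MvPolynomial σ R) :
    p ^ e * (cartier p e a f).totalDegree ≤ f.totalDegree :=
  (Nat.mul_le_mul_left _ (totalDegree_le_of_support_subset (support_map_subset _ _))).trans
    (mul_totalDegree_contract_le _ a f)

lemma exists_cartier_ne_zero {f : MvPolynomial σ R} (hf : f ≠ 0) :
    ∃ a : σ →₀ ℕ, (∀ i, a i < p ^ e) ∧ cartier p e a f ≠ 0 := by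
  obtain ⟨a, ha, hfa⟩ := exists_contract_ne_zero (expChar_pow_pos R p e) hf
  exact ⟨a, ha, fun h => hfa ((map_eq_zero_iff _
    (map_injective _ (iterateFrobeniusEquiv R p e).symm.injective)).1 h)⟩

lemma exists_mem_fatPointIdeal_pow_mul_totalDegree_le [Fintype σ] [Nonempty σ] {S : Set (σ → R)}
    {t : ℕ} {f : MvPolynomial σ R} (hf : f ∈ fatPointIdeal S ((t + Fintype.card σ - 1) * p ^ e))
    (hf0 : f ≠ 0) :
    ∃ g ∈ fatPointIdeal S t, g ≠ 0 ∧ p ^ e * g.totalDegree ≤ f.totalDegree := by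
  obtain ⟨a, ha, hfa⟩ := exists_cartier_ne_zero (p := p) (e := e) hf0
  refine ⟨cartier p e a f, mem_fatPointIdeal.2 fun w hw => ?_, hfa, mul_totalDegree_cartier_le a f⟩
  exact cartier_mem_of_mem_span_image_pow ha (span_range_pow_le_span_image_pow _ t
    (expChar_pow_pos R p e) (mem_fatPointIdeal.1 hf w hw))

end Cartier

lemma exists_det_submatrix_ne_zero {K ι n : Type*} [Field K] [Fintype n] [DecidableEq n]
    {M : Matrix ι n K} (hM : ∀ v, M *ᵥ v = 0 → v = 0) :
    ∃ r : n → ι, (M.submatrix r id).det ≠ 0 := by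
  have hspan : Submodule.span K (Set.range M.row) = ⊤ := by
    by_contra hlt
    obtain ⟨φ, hφ0, hφ⟩ := Submodule.exists_le_ker_of_lt_top _ (lt_top_iff_ne_top.2 hlt)
    obtain ⟨v, rfl⟩ := (dotProductEquiv K n).surjective φ
    refine hφ0 ?_
    rw [hM v (funext fun i => ?_), map_zero]
    rw [Matrix.mulVec, dotProduct_comm]
    exact hφ (Submodule.subset_span ⟨i, rfl⟩)
  obtain ⟨κ, a, -, hspan_eq, hli⟩ := exists_linearIndependent' K M.row
  let b := Module.Basis.mk hli (by rw [hspan_eq, hspan])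
  let e := (Pi.basisFun K n).indexEquiv b
  refine ⟨a ∘ e, IsUnit.ne_zero ?_⟩
  rw [← Matrix.isUnit_iff_isUnit_det, ← Matrix.linearIndependent_rows_iff_isUnit]
  exact hli.comp e e.injective

section TaylorMatrix

/-- The exponents of the monomials of total degree less than `D`. -/
abbrev ExponentsBelow (σ : Type*) (D : ℕ) : Type _ := {m : σ →₀ ℕ // m.degree < D}

noncomputable instance {σ : Type*} [Finite σ] (D : ℕ) : Fintype (ExponentsBelow σ D) :=
  (Finsupp.finite_of_degree_lt D).fintype

variable {σ ι R : Type*} [CommRing R] {D : ℕ}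

/-- The matrix of the linear system which a polynomial of degree less than `D` satisfies if and
only if, for every `i`, its Taylor coefficient of order `k i` at the point `w i` vanishes. -/
noncomputable def taylorMatrix (w : ι → σ → R) (k : ι → σ →₀ ℕ) (D : ℕ) :
    Matrix ι (ExponentsBelow σ D) R :=
  Matrix.of fun i m => coeff (k i) (recenter (w i) (monomial m.1 1))

lemma map_taylorMatrix {R' : Type*} [CommRing R'] (φ : R →+* R') (w : ι → σ → R)
    (k : ι → σ →₀ ℕ) :
    (taylorMatrix w k D).map φ = taylorMatrix (fun i => φ ∘ w i) k D := by
  ext i m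
  simp only [taylorMatrix, Matrix.map_apply, Matrix.of_apply, ← coeff_map, map_recenter,
    map_monomial, map_one]

variable [Finite σ]

lemma taylorMatrix_mulVec (w : ι → σ → R) (k : ι → σ →₀ ℕ) (v : ExponentsBelow σ D → R) (i : ι) :
    (taylorMatrix w k D *ᵥ v) i = coeff (k i) (recenter (w i) (∑ m, monomial m.1 (v m))) := by
  simp only [Matrix.mulVec, dotProduct, taylorMatrix, Matrix.of_apply, map_sum, coeff_sum]
  refine Finset.sum_congr rfl fun m _ => ?_
  have hsmul : monomial m.1 (v m) = v m • monomial m.1 (1 : R) := by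
    rw [smul_monomial, smul_eq_mul, mul_one]
  rw [hsmul, map_smul, coeff_smul, smul_eq_mul, mul_comm]

lemma coeff_sum_monomial (v : ExponentsBelow σ D → R) (k : σ →₀ ℕ) :
    coeff k (∑ m, monomial m.1 (v m)) = if h : k.degree < D then v ⟨k, h⟩ else 0 := by
  classical
  simp only [coeff_sum, coeff_monomial]
  split_ifs with h
  · rw [Finset.sum_eq_single ⟨k, h⟩ (fun m _ hm => if_neg fun hmk => hm (Subtype.ext hmk))
      (fun hk => absurd (Finset.mem_univ _) hk), if_pos rfl]
  · exact Finset.sum_eq_zero fun m _ => if_neg fun hmk : m.1 = k => h (hmk ▸ m.2)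

lemma sum_monomial_coeff_of_totalDegree_lt {f : MvPolynomial σ R} (hf : f.totalDegree < D) :
    ∑ m : ExponentsBelow σ D, monomial m.1 (coeff m.1 f) = f := by
  ext k
  rw [coeff_sum_monomial (fun m => coeff m.1 f)]
  split_ifs with hk
  · rfl
  · by_contra hcoeff
    exact hk ((le_totalDegree (mem_support_iff.2 (Ne.symm hcoeff))).trans_lt hf)

lemma totalDegree_sum_monomial_lt {v : ExponentsBelow σ D → R}
    (hv : ∑ m, monomial m.1 (v m) ≠ 0) : (∑ m, monomial m.1 (v m)).totalDegree < D := by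
  have hlt : ∀ k ∈ (∑ m, monomial m.1 (v m)).support, k.degree < D := fun k hk => by
    by_contra hkD
    rw [mem_support_iff, coeff_sum_monomial, dif_neg hkD] at hk
    exact hk rfl
  obtain ⟨k, hk⟩ := support_nonempty.2 hv
  exact (Finset.sup_lt_iff ((Nat.zero_le _).trans_lt (hlt k hk))).2 hlt

variable [DecidableEq σ]

lemma exists_det_taylorMatrix_ne_zero {K : Type*} [Field K] (S : Set (σ → K)) (t : ℕ)
    (hD : D ≤ minDegree (fatPointIdeal S t)) :
    ∃ (w : ExponentsBelow σ D → σ → K) (k : ExponentsBelow σ D → σ →₀ ℕ),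
      Set.range w ⊆ S ∧ (∀ i, (k i).degree < t) ∧ (taylorMatrix w k D).det ≠ 0 := by
  have hinj : ∀ v, taylorMatrix (fun x : S × ExponentsBelow σ t => x.1.1) (fun x => x.2.1) D *ᵥ v
      = 0 → v = 0 := by
    intro v hv
    have hmem : ∑ m, monomial m.1 (v m) ∈ fatPointIdeal S t := mem_fatPointIdeal.2 fun w hw =>
      mem_pointIdeal_pow_iff.2 fun k hk => by
        simpa only [taylorMatrix_mulVec, Pi.zero_apply] using congrFun hv (⟨w, hw⟩, ⟨k, hk⟩)
    have hzero : ∑ m, monomial m.1 (v m) = 0 := by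
      by_contra hne
      exact (totalDegree_sum_monomial_lt hne).not_ge (hD.trans (minDegree_le hmem hne))
    funext m
    simpa [coeff_sum_monomial, m.2] using congrArg (coeff m.1) hzero
  obtain ⟨r, hr⟩ := exists_det_submatrix_ne_zero hinj
  exact ⟨fun m => (r m).1.1, fun m => (r m).2.1, Set.range_subset_iff.2 fun m => (r m).1.2,
    fun m => (r m).2.2, hr⟩

lemma le_totalDegree_of_det_taylorMatrix_ne_zero [IsDomain R] {w : ExponentsBelow σ D → σ → R}
    {k : ExponentsBelow σ D → σ →₀ ℕ} {t : ℕ} (hk : ∀ i, (k i).degree < t)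
    (hdet : (taylorMatrix w k D).det ≠ 0) {f : MvPolynomial σ R}
    (hf : f ∈ fatPointIdeal (Set.range w) t) (hf0 : f ≠ 0) : D ≤ f.totalDegree := by
  by_contra! hlt
  have hcoeff := Matrix.eq_zero_of_mulVec_eq_zero hdet (v := fun m => coeff m.1 f) <|
    funext fun i => by
      rw [taylorMatrix_mulVec, sum_monomial_coeff_of_totalDegree_lt hlt]
      exact mem_fatPointIdeal_range_iff.1 hf i (k i) (hk i)
  refine hf0 ?_
  rw [← sum_monomial_coeff_of_totalDegree_lt hlt]
  exact Finset.sum_eq_zero fun m _ => by rw [congrFun hcoeff m, Pi.zero_apply, map_zero]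

end TaylorMatrix

section Specialization

lemma isJacobsonRing_int : IsJacobsonRing ℤ := by
  refine isJacobsonRing_iff_prime_eq.2 fun P hP => ?_
  rcases eq_or_ne P ⊥ with rfl | hP0
  · refine eq_bot_iff.2 fun x hx => ?_
    have hunit := Ideal.mem_jacobson_bot.1 hx (3 * x)
    rw [Int.isUnit_iff] at hunit
    -- `3 * x ^ 2 + 1` is a unit only for `x = 0`.
    have hsq : x * x = 0 := by
      rcases hunit with hunit | hunit
      · linarith
      · nlinarith [mul_self_nonneg x]
    exact Ideal.mem_bot.2 (mul_self_eq_zero.1 hsq)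
  · have : P.IsMaximal := hP.isMaximal hP0
    exact Ideal.jacobson_eq_self_of_isMaximal

lemma exists_prime_charP_quotient_of_finiteType_int {A : Type*} [CommRing A]
    [Algebra.FiniteType ℤ A] (M : Ideal A) [M.IsMaximal] : ∃ p : ℕ, p.Prime ∧ CharP (A ⧸ M) p := by
  let := Ideal.Quotient.field M
  have := isJacobsonRing_int
  have := finite_of_finite_type_of_isJacobsonRing ℤ (A ⧸ M)
  obtain ⟨p, hchar⟩ := CharP.exists (A ⧸ M)
  refine ⟨p, (CharP.char_is_prime_or_zero (A ⧸ M) p).resolve_right ?_, hchar⟩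
  rintro rfl
  have := CharP.charP_to_charZero (A ⧸ M)
  exact Int.not_isField (isField_of_isIntegral_of_isField
    (algebraMap ℤ (A ⧸ M)).injective_int (Field.toIsField (A ⧸ M)))

lemma exists_valuationSubring_charP_residueField {K : Type*} [Field K] {s : Set K}
    (hs : s.Finite) :
    ∃ V : ValuationSubring K, s ⊆ V ∧
      ∃ p : ℕ, p.Prime ∧ CharP (IsLocalRing.ResidueField V) p := by
  let A := Algebra.adjoin ℤ s
  have : Algebra.FiniteType ℤ A := (Subalgebra.fg_iff_finiteType A).1 ⟨hs.toFinset, by simp [A]⟩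
  obtain ⟨M, hM⟩ := Ideal.exists_maximal A
  obtain ⟨p, hp, hchar⟩ := exists_prime_charP_quotient_of_finiteType_int M
  obtain ⟨V, hAV, hMV⟩ :=
    Ideal.image_subset_nonunits_valuationSubring (A := A.toSubring) M hM.ne_top
  refine ⟨V, fun x hx => hAV (Algebra.subset_adjoin hx), p, hp,
    (CharP.charP_iff_prime_eq_zero hp).2 ?_⟩
  have hpM : (p : A) ∈ M := Ideal.Quotient.eq_zero_iff_mem.1 (by simp)
  obtain ⟨_, hpV⟩ := ValuationSubring.mem_nonunits_iff_exists_mem_maximalIdeal.1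
    (hMV ⟨(p : A), hpM, by simp⟩ : (p : K) ∈ V.nonunits)
  rw [← map_natCast (IsLocalRing.residue V), IsLocalRing.residue_eq_zero_iff]
  exact hpV

variable {σ ι R R' : Type*} [CommRing R] [CommRing R']

lemma map_mem_fatPointIdeal_range {w : ι → σ → R} {t : ℕ} {f : MvPolynomial σ R} (φ : R →+* R')
    (hf : f ∈ fatPointIdeal (Set.range w) t) :
    map φ f ∈ fatPointIdeal (Set.range fun i => φ ∘ w i) t :=
  mem_fatPointIdeal_range_iff.2 fun i k hk => by
    rw [← map_recenter, coeff_map, mem_fatPointIdeal_range_iff.1 hf i k hk, map_zero]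

lemma mem_fatPointIdeal_range_of_map {w : ι → σ → R} {t : ℕ} {f : MvPolynomial σ R} {φ : R →+* R'}
    (hφ : Function.Injective φ)
    (hf : map φ f ∈ fatPointIdeal (Set.range fun i => φ ∘ w i) t) :
    f ∈ fatPointIdeal (Set.range w) t :=
  mem_fatPointIdeal_range_iff.2 fun i k hk => hφ <| by
    rw [map_zero, ← coeff_map, map_recenter, mem_fatPointIdeal_range_iff.1 hf i k hk]

variable {K : Type*} [Field K] (V : ValuationSubring K)

lemma exists_map_subtype_eq_C_mul {f : MvPolynomial σ K} (hf : f ≠ 0) :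
    ∃ (c : K) (g : MvPolynomial σ V) (m : σ →₀ ℕ),
      map V.subtype g = C c * f ∧ coeff m g = 1 := by
  obtain ⟨m, hm, hmax⟩ := Finset.exists_max_image f.support (fun m => V.valuation (coeff m f))
    (support_nonempty.2 hf)
  have hc : coeff m f ≠ 0 := mem_support_iff.1 hm
  have hval : ∀ k, V.valuation (coeff k f) ≤ V.valuation (coeff m f) := fun k => by
    by_cases hk : k ∈ f.support
    · exact hmax k hk
    · simp [notMem_support_iff.1 hk]
  have hrange : C (coeff m f)⁻¹ * f ∈ Set.range (map (σ := σ) V.subtype) := by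
    refine mem_range_map_iff_coeffs_subset.2 fun x hx => ?_
    obtain ⟨k, -, rfl⟩ := mem_coeffs_iff.1 (Finset.mem_coe.1 hx)
    refine ⟨⟨coeff k (C (coeff m f)⁻¹ * f), ?_⟩, rfl⟩
    rw [coeff_C_mul, ← V.valuation_le_one_iff, map_mul, map_inv₀,
      inv_mul_le_one₀ (zero_lt_iff.2 ((map_ne_zero _).2 hc))]
    exact hval k
  obtain ⟨g, hg⟩ := hrange
  refine ⟨_, g, m, hg, Subtype.ext ?_⟩
  have hcoeff := congrArg (coeff m) hg
  rwa [coeff_map, coeff_C_mul, inv_mul_cancel₀ hc] at hcoeff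

lemma exists_mem_fatPointIdeal_specialization [Nontrivial R] (φ : V →+* R) {w : ι → σ → V} {t : ℕ}
    {f : MvPolynomial σ K} (hf : f ∈ fatPointIdeal (Set.range fun i => V.subtype ∘ w i) t)
    (hf0 : f ≠ 0) :
    ∃ g ∈ fatPointIdeal (Set.range fun i => φ ∘ w i) t, g ≠ 0 ∧
      g.totalDegree ≤ f.totalDegree := by
  obtain ⟨c, g, m, hg, hm⟩ := exists_map_subtype_eq_C_mul V hf0
  have hgw : g ∈ fatPointIdeal (Set.range w) t :=
    mem_fatPointIdeal_range_of_map V.subtype_injective (hg ▸ Ideal.mul_mem_left _ _ hf)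
  have hsupport : (map φ g).support ⊆ f.support := fun k hk => by
    have hgk : k ∈ (C c * f).support := by
      rw [← hg, support_map_of_injective _ V.subtype_injective]
      exact support_map_subset φ g hk
    rw [mem_support_iff, coeff_C_mul] at hgk
    exact mem_support_iff.2 (right_ne_zero_of_mul hgk)
  exact ⟨map φ g, map_mem_fatPointIdeal_range φ hgw, ne_zero_iff.2 ⟨m, by simp [coeff_map, hm]⟩,
    totalDegree_le_iff_degree_le.2 fun k hk => le_totalDegree (hsupport hk)⟩

lemma map_ne_zero_of_inv_mem [Nontrivial R] (φ : V →+* R) {x : V} (hx : x ≠ 0)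
    (hinv : (x : K)⁻¹ ∈ V) : φ x ≠ 0 := by
  have hunit : IsUnit x := IsUnit.of_mul_eq_one ⟨(x : K)⁻¹, hinv⟩ <|
    Subtype.ext (mul_inv_cancel₀ fun h => hx (Subtype.ext h))
  exact (hunit.map φ).ne_zero

end Specialization

section LowerBound

variable {σ K : Type*} [Fintype σ] [Nonempty σ] [Field K]

lemma exists_prime_forall_pow_mul_minDegree_le {S : Set (σ → K)} (hS : vanishingIdeal K S ≠ ⊥)
    (t : ℕ) :
    ∃ p : ℕ, p.Prime ∧ ∀ e, p ^ e * minDegree (fatPointIdeal S t) ≤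
      minDegree (fatPointIdeal S ((t + Fintype.card σ - 1) * p ^ e)) := by
  classical
  set D := minDegree (fatPointIdeal S t) with hD
  obtain ⟨w, k, hwS, hk, hdet⟩ := exists_det_taylorMatrix_ne_zero S t hD.le
  obtain ⟨V, hV, p, hp, hchar⟩ := exists_valuationSubring_charP_residueField
    ((Set.finite_range fun x : ExponentsBelow σ D × σ => w x.1 x.2).insert
      (taylorMatrix w k D).det⁻¹)
  obtain ⟨w, rfl⟩ : ∃ w' : ExponentsBelow σ D → σ → V, w = fun i => V.subtype ∘ w' i :=
    ⟨fun i j => ⟨w i j, hV (Or.inr ⟨(i, j), rfl⟩)⟩, rfl⟩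
  -- The algebraic closure makes the Frobenius bijective, as the Cartier operator requires.
  let φ : V →+* AlgebraicClosure (IsLocalRing.ResidueField V) :=
    (algebraMap _ _).comp (IsLocalRing.residue V)
  have hdet_map : (taylorMatrix (fun i => φ ∘ w i) k D).det ≠ 0 := by
    rw [← map_taylorMatrix, ← RingHom.mapMatrix_apply, ← RingHom.map_det] at hdet ⊢
    refine map_ne_zero_of_inv_mem V φ (ne_zero_of_map hdet) (hV (Or.inl ?_))
    rw [← map_taylorMatrix, ← RingHom.mapMatrix_apply, ← RingHom.map_det]
    rfl
  have : ExpChar (AlgebraicClosure (IsLocalRing.ResidueField V)) p := ExpChar.prime hp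
  refine ⟨p, hp, fun e => ?_⟩
  obtain ⟨f, hf, hf0, hfD⟩ := exists_totalDegree_eq_minDegree (fatPointIdeal_ne_bot hS
    ((t + Fintype.card σ - 1) * p ^ e))
  obtain ⟨g, hg, hg0, hgf⟩ :=
    exists_mem_fatPointIdeal_specialization V φ (fatPointIdeal_anti hwS _ hf) hf0
  obtain ⟨h, hh, hh0, hhg⟩ := exists_mem_fatPointIdeal_pow_mul_totalDegree_le hg hg0
  calc p ^ e * D ≤ p ^ e * h.totalDegree :=
        Nat.mul_le_mul_left _ (le_totalDegree_of_det_taylorMatrix_ne_zero hk hdet_map hh hh0)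
    _ ≤ g.totalDegree := hhg
    _ ≤ f.totalDegree := hgf
    _ = _ := hfD

end LowerBound

section Fekete

variable {u : ℕ → ℝ}

lemma div_le_apply_one_of_subadditive (hu : Subadditive u) {t : ℕ} (ht : t ≠ 0) :
    u t / t ≤ u 1 := by
  rw [div_le_iff₀' (by positivity)]
  obtain ⟨s, rfl⟩ := Nat.exists_eq_succ_of_ne_zero ht
  have hmul := hu.apply_mul_add_le s 1 1
  rw [mul_one] at hmul
  push_cast
  linarith

lemma div_le_lim_of_forall_pow_mul_le (hu : Subadditive u)
    (hbdd : BddBelow (Set.range fun t => u t / t)) {p c : ℕ} (hp : 1 < p) (hc : 0 < c) {x : ℝ}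
    (h : ∀ e, (p : ℝ) ^ e * x ≤ u (c * p ^ e)) : x / c ≤ hu.lim := by
  have hsub : Filter.Tendsto (fun e => c * p ^ e) Filter.atTop Filter.atTop :=
    (tendsto_pow_atTop_atTop_of_one_lt hp).const_mul_atTop' hc
  refine ge_of_tendsto' ((hu.tendsto_lim hbdd).comp hsub) fun e => ?_
  have hpe : (0 : ℝ) < (p : ℝ) ^ e := by positivity
  rw [Function.comp_apply, Nat.cast_mul, Nat.cast_pow, ← mul_div_mul_right x _ hpe.ne', mul_comm x]
  gcongr
  exact h e

end Fekete

theorem omega_limit_exists_general {σ K : Type*} [Fintype σ] [Nonempty σ] [Field K]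
    {S : Set (σ → K)} (hS : vanishingIdeal K S ≠ ⊥) :
    ∃ Ω : ℝ,
      Filter.Tendsto (fun t : ℕ => (minDegree (fatPointIdeal S t) : ℝ) / t) Filter.atTop
        (nhds Ω) ∧
      ∀ t : ℕ, 1 ≤ t →
        (minDegree (fatPointIdeal S t) : ℝ) / ((t : ℝ) + (Fintype.card σ : ℝ) - 1) ≤ Ω ∧
        Ω ≤ (minDegree (fatPointIdeal S t) : ℝ) / t ∧
        (minDegree (fatPointIdeal S t) : ℝ) / t ≤ (minDegree (fatPointIdeal S 1) : ℝ) := by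
  have hsub := subadditive_minDegree_fatPointIdeal hS
  have hbdd : BddBelow (Set.range fun t : ℕ => (minDegree (fatPointIdeal S t) : ℝ) / t) :=
    ⟨0, by rintro _ ⟨t, rfl⟩; positivity⟩
  refine ⟨hsub.lim, hsub.tendsto_lim hbdd, fun t ht => ⟨?_, ?_, ?_⟩⟩
  · obtain ⟨p, hp, hpow⟩ := exists_prime_forall_pow_mul_minDegree_le hS t
    have hcast : (t : ℝ) + (Fintype.card σ : ℝ) - 1 = (t + Fintype.card σ - 1 : ℕ) := by
      rw [Nat.cast_sub (by omega)]
      push_cast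
      rfl
    rw [hcast]
    exact div_le_lim_of_forall_pow_mul_le hsub hbdd hp.one_lt
      (by have := Fintype.card_pos (α := σ); omega) fun e => by exact_mod_cast hpow e
  · exact hsub.lim_le_div hbdd (by omega)
  · exact div_le_apply_one_of_subadditive hsub (by omega)

/-- The sequence `ω_t(S)/t` converges to a limit `Ω(S)` satisfying
`ω_t(S)/(t+n-1) ≤ Ω(S) ≤ ω_t(S)/t ≤ ω₁(S)` for all `t ≥ 1`. -/
theorem omega_limit_exists
    (n : ℕ) (hn : 1 ≤ n) (S : Set (Fin n → ℂ)) (hS : S.Finite) (hne : S.Nonempty) :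
    ∃ Ω : ℝ,
      Filter.Tendsto (fun t : ℕ => (omegaT n S t : ℝ) / t) Filter.atTop (nhds Ω) ∧
      ∀ t : ℕ, 1 ≤ t →
        (omegaT n S t : ℝ) / ((t : ℝ) + (n : ℝ) - 1) ≤ Ω ∧
        Ω ≤ (omegaT n S t : ℝ) / t ∧
        (omegaT n S t : ℝ) / t ≤ (omegaT n S 1 : ℝ) := by
  have : Nonempty (Fin n) := ⟨⟨0, hn⟩⟩
  simpa only [omegaT_eq_minDegree_fatPointIdeal, Fintype.card_fin] using
    omega_limit_exists_general (vanishingIdeal_ne_bot_of_finite hS)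
end

section
/- Let d and ℓ be positive integers with dℓ > d + ℓ. Let x_1, …, x_d be complex numbers that are linearly independent over ℚ and let y_1, …, y_ℓ be complex numbers that are linearly independent over ℚ. Then at least one of the dℓ numbers e^{x_i y_j} (1 ≤ i ≤ d, 1 ≤ j ≤ ℓ) is transcendental. -/
/-!
Suppose that all the numbers `exp (x i * y j)` are algebraic, hence lie in a number field.
Siegel's lemma provides a nonzero polynomial `F` in the functions `exp (x i * z)`, of degree less
than `L` in each of them, with small integral coefficients, that vanishes at all points
`∑ j, m j * y j` with `0 ≤ m j < N`, as soon as `2 * N ^ ℓ ≤ L ^ d`. Suppose that `F` vanishes at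
these points for all `m j < M`, where `N ≤ M`. These are `M ^ ℓ` zeros, so by the Schwarz lemma
`|F|` is at most `2 ^ (-M ^ ℓ + O(L * M))` at the points with `m j ≤ M`; but the values of `F`
there are algebraic numbers of bounded degree and height `2 ^ O(L * M)`, so by Liouville's
inequality they are zero or at least `2 ^ (-O(L * M))` in absolute value. Because `d * ℓ > d + ℓ`,
one can choose `L` and `N` such that `M ^ ℓ` exceeds `O(L * M)` for all `M ≥ N`. By induction
on `M`, `F` vanishes at all the points `∑ j, m j * y j`, which contradicts the linear independence
of the distinct characters `m ↦ exp ((∑ i, l i * x i) * ∑ j, m j * y j)`.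
-/

open Finset NumberField

universe u v

section Zeros

variable {E : Type*} [NormedAddCommGroup E] [NormedSpace ℂ E] [CompleteSpace E]

theorem exists_differentiable_eq_prod_sub_smul (S : Finset ℂ) {f : ℂ → E}
    (hf : Differentiable ℂ f) (hzero : ∀ s ∈ S, f s = 0) :
    ∃ g : ℂ → E, Differentiable ℂ g ∧ ∀ z, f z = (∏ s ∈ S, (z - s)) • g z := by
  induction S using Finset.induction_on generalizing f with
  | empty => exact ⟨f, hf, by simp⟩
  | insert a S ha ih =>
    have hslope : Differentiable ℂ (dslope f a) := by
      rw [← differentiableOn_univ]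
      exact (Complex.differentiableOn_dslope Filter.univ_mem).2 hf.differentiableOn
    have hfa (z : ℂ) : f z = (z - a) • dslope f a z := by
      rw [sub_smul_dslope, hzero a (mem_insert_self a S), sub_zero]
    have hslope_zero : ∀ s ∈ S, dslope f a s = 0 := fun s hs =>
      (smul_eq_zero.1 ((hfa s).symm.trans (hzero s (mem_insert_of_mem hs)))).resolve_left
        (sub_ne_zero.2 fun hsa => ha (hsa ▸ hs))
    obtain ⟨g, hg, hgz⟩ := ih hslope hslope_zero
    exact ⟨g, hg, fun z => by rw [prod_insert ha, hfa z, hgz z, mul_smul]⟩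

theorem norm_le_pow_card_mul_of_zeros {S : Finset ℂ} {f : ℂ → E} (hf : Differentiable ℂ f)
    (hzero : ∀ s ∈ S, f s = 0) {r R B : ℝ} (hrR : r < R) (hS : ∀ s ∈ S, ‖s‖ ≤ r)
    (hB : ∀ w, ‖w‖ = R → ‖f w‖ ≤ B) {z : ℂ} (hz : ‖z‖ ≤ r) :
    ‖f z‖ ≤ (2 * r / (R - r)) ^ #S * B := by
  obtain ⟨g, hg, hfg⟩ := exists_differentiable_eq_prod_sub_smul S hf hzero
  have hR : 0 < R := (norm_nonneg z).trans_lt (hz.trans_lt hrR)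
  have hRr : 0 < R - r := sub_pos.2 hrR
  have hprod_ge (w : ℂ) (hw : ‖w‖ = R) : (R - r) ^ #S ≤ ‖∏ s ∈ S, (w - s)‖ := by
    rw [norm_prod, ← prod_const]
    exact prod_le_prod (fun _ _ => hRr.le) fun s hs => by
      linarith [norm_sub_norm_le w s, hS s hs]
  have hprod_le : ‖∏ s ∈ S, (z - s)‖ ≤ (2 * r) ^ #S := by
    rw [norm_prod, ← prod_const]
    exact prod_le_prod (fun _ _ => norm_nonneg _) fun s hs => by
      linarith [norm_sub_le z s, hS s hs]
  have hg_sphere : ∀ w ∈ frontier (Metric.ball (0 : ℂ) R), ‖g w‖ ≤ B / (R - r) ^ #S := by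
    intro w hw
    rw [frontier_ball _ hR.ne', mem_sphere_zero_iff_norm] at hw
    rw [le_div_iff₀ (pow_pos hRr _)]
    calc ‖g w‖ * (R - r) ^ #S ≤ ‖g w‖ * ‖∏ s ∈ S, (w - s)‖ := by
          gcongr
          exact hprod_ge w hw
      _ = ‖f w‖ := by rw [hfg w, norm_smul, mul_comm]
      _ ≤ B := hB w hw
  have hg_le : ‖g z‖ ≤ B / (R - r) ^ #S :=
    Complex.norm_le_of_forall_mem_frontier_norm_le Metric.isBounded_ball hg.diffContOnCl
      hg_sphere (subset_closure (mem_ball_zero_iff.2 (hz.trans_lt hrR)))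
  calc ‖f z‖ = ‖∏ s ∈ S, (z - s)‖ * ‖g z‖ := by rw [hfg z, norm_smul]
    _ ≤ (2 * r) ^ #S * (B / (R - r) ^ #S) :=
        mul_le_mul hprod_le hg_le (norm_nonneg _) ((norm_nonneg _).trans hprod_le)
    _ = (2 * r / (R - r)) ^ #S * B := by rw [div_pow]; ring

end Zeros

section Lattice

variable {ι : Type*} [Fintype ι]

/-- The point `∑ i, n i • x i` of the semigroup generated by the `x i`, with coordinates `n`. -/
noncomputable def latticePoint (x : ι → ℂ) (n : ι → ℕ) : ℂ :=
  ∑ i, n i • x i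

theorem latticePoint_injective {x : ι → ℂ} (hx : LinearIndependent ℚ x) :
    Function.Injective (latticePoint x) :=
  (hx.restrict_scalars (R := ℕ)
    (by simpa using Nat.cast_injective)).fintypeLinearCombination_injective

theorem latticePoint_add (x : ι → ℂ) (m n : ι → ℕ) :
    latticePoint x (m + n) = latticePoint x m + latticePoint x n := by
  simp only [latticePoint, Pi.add_apply, add_smul, sum_add_distrib]

theorem latticePoint_single [DecidableEq ι] (x : ι → ℂ) (i : ι) :
    latticePoint x (Pi.single i 1) = x i := by
  simp [latticePoint, Pi.single_apply, ite_smul]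

theorem norm_latticePoint_le (x : ι → ℂ) {n : ι → ℕ} {M : ℕ} (hn : ∀ i, n i ≤ M) :
    ‖latticePoint x n‖ ≤ M * ∑ i, ‖x i‖ := by
  rw [mul_sum]
  refine norm_sum_le_of_le _ fun i _ => norm_nsmul_le.trans ?_
  gcongr
  exact hn i

theorem cexp_latticePoint_mul_latticePoint {κ : Type*} [Fintype κ] (x : ι → ℂ) (y : κ → ℂ)
    (n : ι → ℕ) (m : κ → ℕ) :
    Complex.exp (latticePoint x n * latticePoint y m) =
      ∏ t : ι × κ, Complex.exp (x t.1 * y t.2) ^ (n t.1 * m t.2) := by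
  simp only [latticePoint, sum_mul_sum, ← univ_product_univ, ← sum_product', Complex.exp_sum,
    ← Complex.exp_nat_mul, nsmul_eq_mul]
  refine prod_congr rfl fun t _ => congrArg Complex.exp ?_
  push_cast
  ring

/-- `f` vanishes at the lattice points of the `y j` whose coordinates lie in the box `[0, M)`. -/
def VanishesOnBox (y : ι → ℂ) (M : ℕ) (f : ℂ → ℂ) : Prop :=
  ∀ m : ι → ℕ, (∀ j, m j < M) → f (latticePoint y m) = 0

theorem VanishesOnBox.norm_mul_two_pow_le [Nonempty ι] {y : ι → ℂ}
    (hy : LinearIndependent ℚ y) {M : ℕ} (hM : 0 < M) {f : ℂ → ℂ} (hf : Differentiable ℂ f)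
    (hvan : VanishesOnBox y M f) {B : ℝ}
    (hB : ∀ w, ‖w‖ = 5 * (M * ∑ j, ‖y j‖) → ‖f w‖ ≤ B)
    {z : ℂ} (hz : ‖z‖ ≤ M * ∑ j, ‖y j‖) :
    ‖f z‖ * 2 ^ (M ^ Fintype.card ι) ≤ B := by
  classical
  set r : ℝ := M * ∑ j, ‖y j‖
  have hr : 0 < r :=
    mul_pos (Nat.cast_pos.2 hM) (sum_pos (fun j _ => norm_pos_iff.2 (hy.ne_zero j)) univ_nonempty)
  let S : Finset ℂ := univ.image fun m : ι → Fin M => latticePoint y (Fin.val ∘ m)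
  have hcard : #S = M ^ Fintype.card ι :=
    (card_image_of_injective univ
      ((latticePoint_injective hy).comp Fin.val_injective.comp_left)).trans (by simp)
  have hzero : ∀ s ∈ S, f s = 0 :=
    forall_mem_image.2 fun m _ => hvan _ fun j => (m j).isLt
  have hS : ∀ s ∈ S, ‖s‖ ≤ r :=
    forall_mem_image.2 fun m _ => norm_latticePoint_le y fun j => (m j).isLt.le
  have hschwarz := norm_le_pow_card_mul_of_zeros hf hzero (by linarith : r < 5 * r) hS hB hz
  have hratio : 2 * r / (5 * r - r) = 2⁻¹ := by
    field_simp
    norm_num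
  rwa [hratio, inv_pow, inv_mul_eq_div, le_div_iff₀ (by positivity), hcard] at hschwarz

end Lattice

section ExpSum

variable {κ Λ : Type*} [Fintype κ]

/-- The character `m ↦ exp (w * latticePoint y m)` of the additive monoid `κ → ℕ`, bundled
multiplicatively so that Dedekind's linear independence of characters applies to it. -/
noncomputable def latticeChar (y : κ → ℂ) (w : ℂ) : Multiplicative (κ → ℕ) →* ℂ where
  toFun m := Complex.exp (w * latticePoint y m.toAdd)
  map_one' := by simp [latticePoint]
  map_mul' m n := by rw [toAdd_mul, latticePoint_add, mul_add, Complex.exp_add]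

theorem latticeChar_injective [Nontrivial κ] {y : κ → ℂ} (hy : LinearIndependent ℚ y) :
    Function.Injective (latticeChar y) := by
  classical
  intro w₁ w₂ heq
  have hexp (j : κ) : ∃ n : ℤ, w₁ * y j = w₂ * y j + n * (2 * Real.pi * Complex.I) := by
    have hj := DFunLike.congr_fun heq (Multiplicative.ofAdd (Pi.single j 1))
    simpa only [latticeChar, MonoidHom.coe_mk, OneHom.coe_mk, toAdd_ofAdd, latticePoint_single,
      Complex.exp_eq_exp_iff_exists_int] using hj
  choose n hn using hexp
  obtain ⟨j, k, hjk⟩ := exists_pair_ne κ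
  by_contra hne
  have hrel : (n k : ℚ) • y j + (-n j : ℚ) • y k = 0 := by
    refine (mul_eq_zero.1 ?_).resolve_left (sub_ne_zero.2 hne)
    simp only [Rat.smul_def]
    push_cast
    linear_combination (n k : ℂ) * hn j - (n j : ℂ) * hn k
  have hnj : n j = 0 := by
    simpa using ((LinearIndepOn.pair_iff y hjk).1 (hy.linearIndepOn _) _ _ hrel).2
  have hwy : w₁ * y j = w₂ * y j := by simpa [hnj] using hn j
  exact hne (mul_right_cancel₀ (hy.ne_zero j) hwy)

variable [Fintype Λ]

/-- The exponential sum with frequencies `w` and coefficients `p`. -/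
noncomputable def expSum (w p : Λ → ℂ) (z : ℂ) : ℂ :=
  ∑ a, p a * Complex.exp (w a * z)

theorem differentiable_expSum (w p : Λ → ℂ) : Differentiable ℂ (expSum w p) := by
  unfold expSum
  fun_prop

theorem norm_expSum_le {w p : Λ → ℂ} {W P : ℝ} (hw : ∀ a, ‖w a‖ ≤ W) (hp : ∀ a, ‖p a‖ ≤ P)
    (z : ℂ) : ‖expSum w p z‖ ≤ Fintype.card Λ * (P * Real.exp (W * ‖z‖)) := by
  have hterm (a : Λ) : ‖p a * Complex.exp (w a * z)‖ ≤ P * Real.exp (W * ‖z‖) := by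
    rw [norm_mul]
    refine mul_le_mul (hp a) ?_ (norm_nonneg _) ((norm_nonneg _).trans (hp a))
    calc ‖Complex.exp (w a * z)‖ ≤ Real.exp ‖w a * z‖ := Complex.norm_exp_le_exp_norm _
      _ ≤ Real.exp (W * ‖z‖) := by
          rw [norm_mul]
          gcongr
          exact hw a
  simpa [expSum] using norm_sum_le_of_le univ fun a _ => hterm a

theorem eq_zero_of_expSum_latticePoint_eq_zero [Nontrivial κ] {y : κ → ℂ}
    (hy : LinearIndependent ℚ y) {w p : Λ → ℂ} (hw : Function.Injective w)
    (h : ∀ m, expSum w p (latticePoint y m) = 0) : p = 0 := by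
  have hindep := (linearIndependent_monoidHom (Multiplicative (κ → ℕ)) ℂ).comp
    (latticeChar y ∘ w) ((latticeChar_injective hy).comp hw)
  funext a
  refine Fintype.linearIndependent_iff.1 hindep p ?_ a
  funext m
  simpa [expSum, latticeChar] using h m.toAdd

end ExpSum

section HomogMonomial

variable {τ R S : Type*} [Fintype τ] [CommSemiring R] [CommSemiring S]

/-- The monomial `∏ t, b t ^ e t`, homogenized by `D` to degree `E` in each factor separately, so
that it clears the denominators `D` of the fractions `b t / D`. It is meant for exponents
`e t ≤ E`, where the subtraction does not truncate. -/
def homogMonomial (D : R) (b : τ → R) (E : ℕ) (e : τ → ℕ) : R :=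
  ∏ t, D ^ (E - e t) * b t ^ e t

theorem map_homogMonomial (φ : R →+* S) (D : R) (b : τ → R) (E : ℕ) (e : τ → ℕ) :
    φ (homogMonomial D b E e) = homogMonomial (φ D) (φ ∘ b) E e := by
  simp [homogMonomial]

theorem homogMonomial_mul_left (D : R) (β : τ → R) {E : ℕ} {e : τ → ℕ} (he : ∀ t, e t ≤ E) :
    homogMonomial D (fun t => D * β t) E e = D ^ (Fintype.card τ * E) * ∏ t, β t ^ e t := by
  have hfactor (t : τ) : D ^ (E - e t) * (D * β t) ^ e t = D ^ E * β t ^ e t := by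
    rw [mul_pow, ← mul_assoc, ← pow_add, Nat.sub_add_cancel (he t)]
  simp only [homogMonomial, hfactor, prod_mul_distrib, prod_const, card_univ, ← pow_mul, mul_comm]

end HomogMonomial

section House

variable {K : Type*} [Field K] [NumberField K]

theorem house_prod_le_prod_house {τ : Type*} (s : Finset τ) (f : τ → K) :
    house (∏ t ∈ s, f t) ≤ ∏ t ∈ s, house (f t) := by
  simpa only [house, map_prod] using Finset.norm_prod_le s _

theorem house_homogMonomial_le {τ : Type*} [Fintype τ] {D : K} {b : τ → K} {B : ℝ}
    (hD : house D ≤ B) (hb : ∀ t, house (b t) ≤ B) {E : ℕ} {e : τ → ℕ} (he : ∀ t, e t ≤ E) :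
    house (homogMonomial D b E e) ≤ B ^ (Fintype.card τ * E) := by
  have hpow {β : K} (hβ : house β ≤ B) (k : ℕ) : house (β ^ k) ≤ B ^ k :=
    (house_pow_le β k).trans (pow_le_pow_left₀ (house_nonneg β) hβ k)
  have hB : 0 ≤ B := (house_nonneg D).trans hD
  have hfactor (t : τ) : house (D ^ (E - e t) * b t ^ e t) ≤ B ^ E :=
    calc house (D ^ (E - e t) * b t ^ e t)
        ≤ house (D ^ (E - e t)) * house (b t ^ e t) := house_mul_le _ _
      _ ≤ B ^ (E - e t) * B ^ e t :=
          mul_le_mul (hpow hD _) (hpow (hb t) _) (house_nonneg _) (pow_nonneg hB _)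
      _ = B ^ E := by rw [← pow_add, Nat.sub_add_cancel (he t)]
  calc house (homogMonomial D b E e) ≤ ∏ t, house (D ^ (E - e t) * b t ^ e t) :=
        house_prod_le_prod_house univ _
    _ ≤ ∏ _t : τ, B ^ E := prod_le_prod (fun _ _ => house_nonneg _) fun t _ => hfactor t
    _ = B ^ (Fintype.card τ * E) := by
        rw [prod_const, card_univ, ← pow_mul, mul_comm]

theorem house_mulVec_le {α β : Type*} [Fintype β] (a : Matrix α β (𝓞 K)) (ξ : β → 𝓞 K) {k : α}
    {A X : ℝ} (ha : ∀ l, house (a k l : K) ≤ A) (hξ : ∀ l, house (ξ l : K) ≤ X) :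
    house ((a.mulVec ξ k : 𝓞 K) : K) ≤ Fintype.card β * (A * X) := by
  have hterm (l : β) : house ((a k l : K) * (ξ l : K)) ≤ A * X :=
    (house_mul_le _ _).trans
      (mul_le_mul (ha l) (hξ l) (house_nonneg _) ((house_nonneg _).trans (ha l)))
  calc house ((a.mulVec ξ k : 𝓞 K) : K) = house (∑ l, (a k l : K) * (ξ l : K)) := by
        simp only [Matrix.mulVec, dotProduct, map_sum, map_mul]
    _ ≤ ∑ l, house ((a k l : K) * (ξ l : K)) := house_sum_le_sum_house _ _
    _ ≤ ∑ _l : β, A * X := sum_le_sum fun l _ => hterm l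
    _ = Fintype.card β * (A * X) := by simp

theorem one_le_norm_embedding_mul_pow (σ : K →+* ℂ) {ξ : 𝓞 K} (hξ : ξ ≠ 0) {H : ℝ}
    (hH : house (ξ : K) ≤ H) : 1 ≤ ‖σ ξ‖ * H ^ Module.finrank ℚ K := by
  have hhouse : 1 ≤ house (ξ : K) :=
    one_le_house_of_isIntegral ξ.isIntegral_coe (RingOfIntegers.coe_ne_zero_iff.2 hξ)
  have hnorm : (1 : ℝ) ≤ ‖Algebra.norm ℚ (ξ : K)‖ := by
    rw [← Algebra.coe_norm_int, ← Rat.norm_cast_real, Real.norm_eq_abs]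
    exact_mod_cast Int.one_le_abs (Algebra.norm_ne_zero_iff.2 hξ)
  calc 1 ≤ ‖Algebra.norm ℚ (ξ : K)‖ := hnorm
    _ ≤ ‖σ ξ‖ * house (ξ : K) ^ (Module.finrank ℚ K - 1) := norm_norm_le_norm_mul_house_pow _ σ
    _ ≤ ‖σ ξ‖ * house (ξ : K) ^ Module.finrank ℚ K := by
        gcongr
        exact Nat.sub_le _ _
    _ ≤ ‖σ ξ‖ * H ^ Module.finrank ℚ K := by gcongr

theorem mul_mul_rpow_le_sq_mul (c : ℝ) {q s : ℝ} (hq : 1 ≤ q) (hs₀ : 0 ≤ s) (hs₁ : s ≤ 1) :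
    c * (c * q) ^ s ≤ max 1 |c| ^ 2 * q := by
  have hbase : 1 ≤ max 1 |c| * q := one_le_mul_of_one_le_of_one_le (le_max_left _ _) hq
  have habs : |c * q| ≤ max 1 |c| * q := by
    rw [abs_mul, abs_of_nonneg (zero_le_one.trans hq)]
    gcongr
    exact le_max_right _ _
  calc c * (c * q) ^ s ≤ |c| * |(c * q) ^ s| := (le_abs_self _).trans (abs_mul _ _).le
    _ ≤ |c| * |c * q| ^ s := by
        gcongr
        exact Real.abs_rpow_le_abs_rpow _ _
    _ ≤ max 1 |c| * (max 1 |c| * q) ^ s := by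
        gcongr
        exact le_max_right _ _
    _ ≤ max 1 |c| * (max 1 |c| * q) := by
        gcongr
        exact Real.rpow_le_self_of_one_le hbase hs₁
    _ = max 1 |c| ^ 2 * q := by ring

variable (K) in
theorem exists_siegel_const :
    ∃ C : ℝ, ∀ {α : Type u} {β : Type v} [Fintype α] [Fintype β] [Nonempty β]
      (a : Matrix α β (𝓞 K)) {A : ℝ}, 1 ≤ A → 2 * Fintype.card α ≤ Fintype.card β →
      (∀ k l, house (a k l : K) ≤ A) →
      ∃ ξ : β → 𝓞 K, ξ ≠ 0 ∧ a.mulVec ξ = 0 ∧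
        ∀ l, house (ξ l : K) ≤ C * (Fintype.card β * A) := by
  classical
  -- The constant of the library's Siegel lemma is private, so it is only available by unification.
  have hsiegel : ∃ c : ℝ, ∀ {α : Type u} {β : Type v} [Fintype α] [Fintype β]
      (a : Matrix α β (𝓞 K)) {A : ℝ}, a ≠ 0 → 0 < Fintype.card α →
      Fintype.card α < Fintype.card β → (∀ k l, house (a k l : K) ≤ A) →
      ∃ ξ : β → 𝓞 K, ξ ≠ 0 ∧ a.mulVec ξ = 0 ∧ ∀ l, house (ξ l : K) ≤ c * (c * Fintype.card β * A) ^
        ((Fintype.card α : ℝ) / (Fintype.card β - Fintype.card α)) :=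
    ⟨_, fun a _ ha hα hαβ hA => house.exists_ne_zero_int_vec_house_le K a ha hα hαβ rfl hA rfl⟩
  obtain ⟨c, hc⟩ := hsiegel
  refine ⟨max 1 |c| ^ 2, fun {α β} _ _ _ a A hA hαβ ha => ?_⟩
  have hβA : 1 ≤ Fintype.card β * A :=
    one_le_mul_of_one_le_of_one_le (Nat.one_le_cast.2 Fintype.card_pos) hA
  rcases eq_or_ne a 0 with rfl | ha₀
  · refine ⟨1, one_ne_zero, Matrix.zero_mulVec 1, fun l => ?_⟩
    have hone : house (((1 : β → 𝓞 K) l : 𝓞 K) : K) = 1 := by simpa using house_intCast (K := K) 1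
    rw [hone]
    exact one_le_mul_of_one_le_of_one_le (one_le_pow₀ (le_max_left _ _)) hβA
  · have hα : 0 < Fintype.card α :=
      Fintype.card_pos_iff.2 (not_isEmpty_iff.1 fun _ => ha₀ (Subsingleton.elim _ _))
    obtain ⟨ξ, hξ₀, haξ, hξ⟩ := hc a ha₀ hα (by omega) ha
    have hα' : (0 : ℝ) < Fintype.card α := Nat.cast_pos.2 hα
    have hαβ' : (2 : ℝ) * Fintype.card α ≤ Fintype.card β := by exact_mod_cast hαβ
    have hgap : (0 : ℝ) < Fintype.card β - Fintype.card α := by linarith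
    refine ⟨ξ, hξ₀, haξ, fun l => (hξ l).trans ?_⟩
    rw [mul_assoc c]
    exact mul_mul_rpow_le_sq_mul c hβA (by positivity) ((div_le_one hgap).2 (by linarith))

end House

section PowersOfTwo

theorem exists_forall_le_two_pow {τ : Type*} [Finite τ] (f : τ → ℝ) :
    ∃ c : ℕ, ∀ t, f t ≤ 2 ^ c := by
  obtain ⟨B, hB⟩ := Set.finite_range f |>.bddAbove
  obtain ⟨c, hc⟩ := pow_unbounded_of_one_lt B one_lt_two
  exact ⟨c, fun t => (hB (Set.mem_range_self t)).trans hc.le⟩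

theorem natCast_pow_le_two_pow (L d : ℕ) {M : ℕ} (hM : 0 < M) :
    (L : ℝ) ^ d ≤ 2 ^ (d * (L * M)) :=
  calc (L : ℝ) ^ d ≤ (2 ^ L) ^ d := by
        gcongr
        exact_mod_cast Nat.lt_two_pow_self.le
    _ = 2 ^ (d * L) := by rw [← pow_mul, mul_comm]
    _ ≤ 2 ^ (d * (L * M)) := by
        gcongr
        · exact one_le_two
        · exact Nat.le_mul_of_pos_right L hM

end PowersOfTwo

section ValueMatrix

variable {ι κ : Type*} [Fintype ι] [Fintype κ] {L : ℕ}

/-- The matrix of the numbers `exp (latticePoint x l * latticePoint y m)`, where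
`exp (x i * y j) = b (i, j) / D`, multiplied by a power of `D` that clears all denominators as long
as `m j ≤ M`. -/
def valueMatrix {R : Type*} [CommSemiring R] (D : R) (b : ι × κ → R) (L M : ℕ) :
    Matrix (κ → ℕ) (ι → Fin L) R :=
  Matrix.of fun m l => homogMonomial D b (L * M) fun t => l t.1 * m t.2

variable {K : Type*} [Field K] {D : 𝓞 K} {b : ι × κ → 𝓞 K}

theorem house_valueMatrix_le [NumberField K] {B : ℝ} (hD : house (D : K) ≤ B)
    (hb : ∀ t, house (b t : K) ≤ B) {M : ℕ} {m : κ → ℕ} (hm : ∀ j, m j ≤ M) (l : ι → Fin L) :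
    house (valueMatrix D b L M m l : K) ≤ B ^ (Fintype.card (ι × κ) * (L * M)) := by
  rw [valueMatrix, Matrix.of_apply, RingOfIntegers.coe_eq_algebraMap, map_homogMonomial]
  exact house_homogMonomial_le hD hb fun t => Nat.mul_le_mul (l t.1).isLt.le (hm t.2)

theorem embedding_valueMatrix {σ : K →+* ℂ} {x : ι → ℂ} {y : κ → ℂ}
    (hb : ∀ t, σ (b t) = σ D * Complex.exp (x t.1 * y t.2)) {M : ℕ} {m : κ → ℕ}
    (hm : ∀ j, m j ≤ M) (l : ι → Fin L) :
    σ (valueMatrix D b L M m l) = σ D ^ (Fintype.card (ι × κ) * (L * M)) *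
      Complex.exp (latticePoint x (Fin.val ∘ l) * latticePoint y m) :=
  calc σ (valueMatrix D b L M m l)
      = homogMonomial (σ D) (fun t => σ (b t)) (L * M) fun t => l t.1 * m t.2 :=
        map_homogMonomial (σ.comp (algebraMap (𝓞 K) K)) D b _ _
    _ = _ := by
        rw [funext hb, cexp_latticePoint_mul_latticePoint]
        exact homogMonomial_mul_left _ _ fun t => Nat.mul_le_mul (l t.1).isLt.le (hm t.2)

end ValueMatrix

section AuxFunction

variable {ι κ : Type*} [Fintype ι] [DecidableEq ι] [Fintype κ] {L : ℕ}

/-- The auxiliary function of the proof: the polynomial in the functions `exp (x i * z)` of degree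
less than `L` in each of them with coefficients `p`. -/
noncomputable def auxFunction (x : ι → ℂ) (p : (ι → Fin L) → ℂ) : ℂ → ℂ :=
  expSum (fun l => latticePoint x (Fin.val ∘ l)) p

theorem norm_auxFunction_le (x : ι → ℂ) {p : (ι → Fin L) → ℂ} {P : ℝ} (hp : ∀ l, ‖p l‖ ≤ P)
    (z : ℂ) :
    ‖auxFunction x p z‖ ≤ L ^ Fintype.card ι * (P * Real.exp (L * (∑ i, ‖x i‖) * ‖z‖)) :=
  (norm_expSum_le (fun l => norm_latticePoint_le x fun i => (l i).isLt.le) hp z).trans_eq (by simp)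

theorem eq_zero_of_auxFunction_latticePoint_eq_zero [Nontrivial κ] {x : ι → ℂ} {y : κ → ℂ}
    (hx : LinearIndependent ℚ x) (hy : LinearIndependent ℚ y) {p : (ι → Fin L) → ℂ}
    (h : ∀ m, auxFunction x p (latticePoint y m) = 0) : p = 0 :=
  eq_zero_of_expSum_latticePoint_eq_zero hy
    ((latticePoint_injective hx).comp Fin.val_injective.comp_left) h

theorem exists_norm_auxFunction_mul_two_pow_le [Nonempty κ] (x : ι → ℂ) {y : κ → ℂ}
    (hy : LinearIndependent ℚ y) :
    ∃ c : ℕ, ∀ {L M k : ℕ}, 0 < M → ∀ {p : (ι → Fin L) → ℂ}, (∀ l, ‖p l‖ ≤ 2 ^ k) →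
      VanishesOnBox y M (auxFunction x p) → ∀ {z : ℂ}, ‖z‖ ≤ M * ∑ j, ‖y j‖ →
      ‖auxFunction x p z‖ * 2 ^ (M ^ Fintype.card κ) ≤ 2 ^ (k + c * (L * M)) := by
  obtain ⟨g, hg⟩ := pow_unbounded_of_one_lt
    (Real.exp (5 * (∑ i, ‖x i‖) * ∑ j, ‖y j‖)) (one_lt_two (α := ℝ))
  refine ⟨Fintype.card ι + g, fun {L M k} hM p hp hvan z hz =>
    hvan.norm_mul_two_pow_le hy hM (differentiable_expSum _ _) (fun w hw => ?_) hz⟩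
  calc ‖auxFunction x p w‖
      ≤ L ^ Fintype.card ι * (2 ^ k * Real.exp (L * (∑ i, ‖x i‖) * ‖w‖)) :=
        norm_auxFunction_le x hp w
    _ = L ^ Fintype.card ι *
          (2 ^ k * Real.exp (5 * (∑ i, ‖x i‖) * ∑ j, ‖y j‖) ^ (L * M)) := by
        rw [hw, ← Real.exp_nat_mul]
        congr 3
        push_cast
        ring
    _ ≤ 2 ^ (Fintype.card ι * (L * M)) * (2 ^ k * (2 ^ g) ^ (L * M)) := by
        gcongr
        exact natCast_pow_le_two_pow L _ hM
    _ = 2 ^ (k + (Fintype.card ι + g) * (L * M)) := by ring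

variable {K : Type*} [Field K] {D : 𝓞 K} {b : ι × κ → 𝓞 K} {σ : K →+* ℂ} {x : ι → ℂ} {y : κ → ℂ}

theorem embedding_valueMatrix_mulVec
    (hb : ∀ t, σ (b t) = σ D * Complex.exp (x t.1 * y t.2)) {M : ℕ} {m : κ → ℕ}
    (hm : ∀ j, m j ≤ M) (p : (ι → Fin L) → 𝓞 K) :
    σ ((valueMatrix D b L M).mulVec p m : 𝓞 K) = σ D ^ (Fintype.card (ι × κ) * (L * M)) *
      auxFunction x (fun l => σ (p l)) (latticePoint y m) := by
  simp only [Matrix.mulVec, dotProduct, map_sum, map_mul, embedding_valueMatrix hb hm, auxFunction,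
    expSum, mul_sum]
  exact sum_congr rfl fun l _ => by ring

theorem auxFunction_eq_zero_iff_valueMatrix_mulVec (hD : D ≠ 0)
    (hb : ∀ t, σ (b t) = σ D * Complex.exp (x t.1 * y t.2)) {M : ℕ} {m : κ → ℕ}
    (hm : ∀ j, m j ≤ M) (p : (ι → Fin L) → 𝓞 K) :
    auxFunction x (fun l => σ (p l)) (latticePoint y m) = 0 ↔
      (valueMatrix D b L M).mulVec p m = 0 := by
  have hσD : σ D ≠ 0 := (map_ne_zero σ).2 (RingOfIntegers.coe_ne_zero_iff.2 hD)
  rw [← RingOfIntegers.coe_eq_zero_iff (K := K), ← map_eq_zero σ,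
    embedding_valueMatrix_mulVec hb hm p, mul_eq_zero, or_iff_right (pow_ne_zero _ hσD)]

variable [NumberField K]

theorem exists_auxFunction_vanishesOnBox (hD : D ≠ 0)
    (hb : ∀ t, σ (b t) = σ D * Complex.exp (x t.1 * y t.2)) :
    ∃ c : ℕ, ∀ {L N : ℕ}, 0 < L → 0 < N → 2 * N ^ Fintype.card κ ≤ L ^ Fintype.card ι →
      ∃ p : (ι → Fin L) → 𝓞 K, p ≠ 0 ∧ VanishesOnBox y N (auxFunction x fun l => σ (p l)) ∧
        ∀ l, house (p l : K) ≤ 2 ^ (c * (L * N)) := by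
  classical
  obtain ⟨C, hsiegel⟩ := exists_siegel_const K
  obtain ⟨e, he⟩ := pow_unbounded_of_one_lt C one_lt_two
  obtain ⟨u, hu⟩ := exists_forall_le_two_pow fun t : Option (ι × κ) =>
    house ((t.elim D b : 𝓞 K) : K)
  refine ⟨e + Fintype.card ι + u * Fintype.card (ι × κ), fun {L N} hL hN hLN => ?_⟩
  have : Nonempty (Fin L) := ⟨⟨0, hL⟩⟩
  obtain ⟨p, hp₀, hp, hhouse⟩ := hsiegel
    ((valueMatrix D b L N).submatrix (fun m : κ → Fin N => Fin.val ∘ m) id)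
    (A := (2 ^ u) ^ (Fintype.card (ι × κ) * (L * N))) (one_le_pow₀ (one_le_pow₀ one_le_two))
    (by simpa using hLN)
    fun m l => house_valueMatrix_le (hu none) (fun t => hu (some t)) (fun j => (m j).isLt.le) l
  refine ⟨p, hp₀, fun m hm => ?_, fun l => (hhouse l).trans ?_⟩
  · rw [auxFunction_eq_zero_iff_valueMatrix_mulVec hD hb fun j => (hm j).le]
    exact congrFun hp fun j => ⟨m j, hm j⟩
  · calc C * (Fintype.card (ι → Fin L) * (2 ^ u) ^ (Fintype.card (ι × κ) * (L * N)))
        ≤ 2 ^ (e * (L * N)) * (2 ^ (Fintype.card ι * (L * N)) *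
            (2 ^ u) ^ (Fintype.card (ι × κ) * (L * N))) := by
          gcongr
          · exact he.le.trans (pow_le_pow_right₀ one_le_two
              (Nat.le_mul_of_pos_right e (Nat.mul_pos hL hN)))
          · simpa using natCast_pow_le_two_pow L (Fintype.card ι) hN
      _ = 2 ^ ((e + Fintype.card ι + u * Fintype.card (ι × κ)) * (L * N)) := by ring

theorem exists_one_le_norm_auxFunction_mul_two_pow (hD : D ≠ 0)
    (hb : ∀ t, σ (b t) = σ D * Complex.exp (x t.1 * y t.2)) :
    ∃ c : ℕ, ∀ {L M k : ℕ}, 0 < M → ∀ {p : (ι → Fin L) → 𝓞 K},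
      (∀ l, house (p l : K) ≤ 2 ^ k) → ∀ {m : κ → ℕ}, (∀ j, m j ≤ M) →
      auxFunction x (fun l => σ (p l)) (latticePoint y m) ≠ 0 →
      1 ≤ ‖auxFunction x (fun l => σ (p l)) (latticePoint y m)‖ *
        2 ^ (Module.finrank ℚ K * k + c * (L * M)) := by
  obtain ⟨u, hu⟩ := exists_forall_le_two_pow fun t : Option (ι × κ) =>
    house ((t.elim D b : 𝓞 K) : K)
  set T := Fintype.card (ι × κ)
  set n := Module.finrank ℚ K
  refine ⟨u * T + n * (Fintype.card ι + u * T), fun {L M k} hM p hp m hm hne => ?_⟩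
  have hσD : ‖σ D‖ ≤ 2 ^ u := (norm_embedding_le_house _ σ).trans (hu none)
  have hhouse : house (((valueMatrix D b L M).mulVec p m : 𝓞 K) : K) ≤
      2 ^ (k + (Fintype.card ι + u * T) * (L * M)) :=
    calc house (((valueMatrix D b L M).mulVec p m : 𝓞 K) : K)
        ≤ Fintype.card (ι → Fin L) * ((2 ^ u) ^ (T * (L * M)) * 2 ^ k) :=
          house_mulVec_le _ _ (house_valueMatrix_le (hu none) (fun t => hu (some t)) hm) hp
      _ ≤ 2 ^ (Fintype.card ι * (L * M)) * ((2 ^ u) ^ (T * (L * M)) * 2 ^ k) := by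
          gcongr
          simpa using natCast_pow_le_two_pow L (Fintype.card ι) hM
      _ = 2 ^ (k + (Fintype.card ι + u * T) * (L * M)) := by ring
  have hne' : (valueMatrix D b L M).mulVec p m ≠ 0 :=
    (auxFunction_eq_zero_iff_valueMatrix_mulVec hD hb hm p).not.1 hne
  have hliouville := one_le_norm_embedding_mul_pow σ hne' hhouse
  rw [embedding_valueMatrix_mulVec hb hm p, norm_mul, norm_pow] at hliouville
  set F := ‖auxFunction x (fun l => σ (p l)) (latticePoint y m)‖
  calc 1 ≤ ‖σ D‖ ^ (T * (L * M)) * F * (2 ^ (k + (Fintype.card ι + u * T) * (L * M))) ^ n :=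
        hliouville
    _ ≤ (2 ^ u) ^ (T * (L * M)) * F * (2 ^ (k + (Fintype.card ι + u * T) * (L * M))) ^ n := by
        gcongr
    _ = F * 2 ^ (n * k + (u * T + n * (Fintype.card ι + u * T)) * (L * M)) := by ring

end AuxFunction

section Extrapolation

variable {ι κ : Type*} [Fintype ι] [Fintype κ] {K : Type*} [Field K] [NumberField K]
  {D : 𝓞 K} {b : ι × κ → 𝓞 K} {σ : K →+* ℂ} {x : ι → ℂ} {y : κ → ℂ}

theorem exists_vanishesOnBox_succ [DecidableEq ι] [Nonempty κ] (hy : LinearIndependent ℚ y)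
    (hD : D ≠ 0) (hb : ∀ t, σ (b t) = σ D * Complex.exp (x t.1 * y t.2)) :
    ∃ c : ℕ, ∀ {L M k : ℕ}, 0 < M → ∀ {p : (ι → Fin L) → 𝓞 K},
      (∀ l, house (p l : K) ≤ 2 ^ k) →
      (Module.finrank ℚ K + 1) * k + c * (L * M) < M ^ Fintype.card κ →
      VanishesOnBox y M (auxFunction x fun l => σ (p l)) →
      VanishesOnBox y (M + 1) (auxFunction x fun l => σ (p l)) := by
  obtain ⟨u, hupper⟩ := exists_norm_auxFunction_mul_two_pow_le x hy
  obtain ⟨w, hlower⟩ := exists_one_le_norm_auxFunction_mul_two_pow hD hb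
  refine ⟨u + w, fun {L M k} hM p hp hlt hvan m hm => ?_⟩
  have hm' (j : κ) : m j ≤ M := Nat.lt_succ_iff.1 (hm j)
  by_contra hne
  have hup := hupper hM (fun l => (norm_embedding_le_house _ σ).trans (hp l)) hvan
    (norm_latticePoint_le y hm')
  have hlow := hlower hM hp hm' hne
  set F := ‖auxFunction x (fun l => σ (p l)) (latticePoint y m)‖
  set n := Module.finrank ℚ K
  have hle : (2 : ℝ) ^ M ^ Fintype.card κ ≤ 2 ^ ((n + 1) * k + (u + w) * (L * M)) :=
    calc (2 : ℝ) ^ M ^ Fintype.card κ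
        ≤ F * 2 ^ (n * k + w * (L * M)) * 2 ^ M ^ Fintype.card κ :=
          le_mul_of_one_le_left (by positivity) hlow
      _ = F * 2 ^ M ^ Fintype.card κ * 2 ^ (n * k + w * (L * M)) := by ring
      _ ≤ 2 ^ (k + u * (L * M)) * 2 ^ (n * k + w * (L * M)) := by gcongr
      _ = 2 ^ ((n + 1) * k + (u + w) * (L * M)) := by ring
  exact hlt.not_ge ((pow_le_pow_iff_right₀ one_lt_two).1 hle)

theorem exists_siegel_parameters {d ℓ : ℕ} (h : d + ℓ < d * ℓ) (T : ℕ) :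
    ∃ L N : ℕ, 0 < L ∧ 0 < N ∧ 2 * N ^ ℓ ≤ L ^ d ∧ ∀ M ≥ N, T * (L * M) < M ^ ℓ := by
  obtain ⟨e, rfl⟩ : ∃ e, ℓ = e + 1 := Nat.exists_eq_succ_of_ne_zero (by grind)
  have hd : d ≠ 0 := by grind
  have he : e + 2 ≤ d * e := by rw [mul_add] at h; omega
  -- The powers of `q` balance `N ^ ℓ` against `L ^ d`, and `d + ℓ < d * ℓ` amounts to
  -- `q ^ (ℓ + 1) ≤ N ^ (ℓ - 1)`.
  set q := 2 * T + 1
  have hq₀ : 0 < q := Nat.succ_pos _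
  refine ⟨2 * q ^ (e + 1), q ^ d, by positivity, by positivity, ?_, fun M hM => ?_⟩
  · calc 2 * (q ^ d) ^ (e + 1) ≤ 2 ^ d * (q ^ d) ^ (e + 1) := by
          gcongr
          exact Nat.le_self_pow hd 2
      _ = (2 * q ^ (e + 1)) ^ d := by rw [mul_pow, ← pow_mul, ← pow_mul, mul_comm d]
  · have hM₀ : 0 < M := (pow_pos hq₀ d).trans_le hM
    calc T * (2 * q ^ (e + 1) * M) = 2 * T * (q ^ (e + 1) * M) := by ring
      _ < q * (q ^ (e + 1) * M) := by
          gcongr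
          exact Nat.lt_succ_self _
      _ = q ^ (e + 2) * M := by ring
      _ ≤ q ^ (d * e) * M := by gcongr
      _ = (q ^ d) ^ e * M := by rw [pow_mul]
      _ ≤ M ^ e * M := by gcongr
      _ = M ^ (e + 1) := (pow_succ _ _).symm

theorem not_forall_embedding_eq_mul_cexp
    (hcard : Fintype.card ι + Fintype.card κ < Fintype.card ι * Fintype.card κ)
    (hx : LinearIndependent ℚ x) (hy : LinearIndependent ℚ y) (hD : D ≠ 0) :
    ¬ ∀ t, σ (b t) = σ D * Complex.exp (x t.1 * y t.2) := by
  classical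
  intro hb
  have : Nontrivial κ := Fintype.one_lt_card_iff_nontrivial.1 (by nlinarith)
  obtain ⟨a, hsiegel⟩ := exists_auxFunction_vanishesOnBox hD hb
  obtain ⟨c, hextrapolate⟩ := exists_vanishesOnBox_succ hy hD hb
  set n := Module.finrank ℚ K
  obtain ⟨L, N, hL, hN, hLN, hlarge⟩ := exists_siegel_parameters hcard ((n + 1) * a + c)
  obtain ⟨p, hp₀, hvan, hp⟩ := hsiegel hL hN hLN
  have hvan_all : ∀ M ≥ N, VanishesOnBox y M (auxFunction x fun l => σ (p l)) :=
    Nat.le_induction hvan fun M hNM hvanM => by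
      refine hextrapolate (hN.trans_le hNM) hp ?_ hvanM
      calc (n + 1) * (a * (L * N)) + c * (L * M) ≤ (n + 1) * (a * (L * M)) + c * (L * M) := by
            gcongr
        _ = ((n + 1) * a + c) * (L * M) := by ring
        _ < M ^ Fintype.card κ := hlarge M hNM
  have hvalue (m : κ → ℕ) : auxFunction x (fun l => σ (p l)) (latticePoint y m) = 0 := by
    obtain ⟨B, hB⟩ := (Set.finite_range m).bddAbove
    exact hvan_all _ (le_max_left N (B + 1)) m fun j =>
      (Nat.lt_succ_of_le (hB (Set.mem_range_self j))).trans_le (le_max_right _ _)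
  refine hp₀ (funext fun l => ?_)
  have hl := congrFun (eq_zero_of_auxFunction_latticePoint_eq_zero hx hy hvalue) l
  exact RingOfIntegers.coe_eq_zero_iff.1 ((map_eq_zero σ).1 hl)

end Extrapolation

theorem exists_embedding_eq_mul_of_isAlgebraic {τ : Type*} [Finite τ] {α : τ → ℂ}
    (hα : ∀ t, IsAlgebraic ℚ (α t)) :
    ∃ (K : Type) (_ : Field K) (_ : NumberField K) (σ : K →+* ℂ) (D : 𝓞 K) (b : τ → 𝓞 K),
      D ≠ 0 ∧ ∀ t, σ (b t) = σ D * α t := by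
  let K := IntermediateField.adjoin ℚ (Set.range α)
  have : FiniteDimensional ℚ K := IntermediateField.finiteDimensional_adjoin <|
    Set.forall_mem_range.2 fun t => (hα t).isIntegral
  have : NumberField K := ⟨⟩
  let β (t : τ) : K := ⟨α t, IntermediateField.subset_adjoin ℚ _ (Set.mem_range_self t)⟩
  obtain ⟨D, hD⟩ := IsLocalization.exist_integer_multiples_of_finite (nonZeroDivisors (𝓞 K)) β
  choose b hb using hD
  refine ⟨K, inferInstance, inferInstance, algebraMap K ℂ, D, b, nonZeroDivisors.ne_zero D.2,
    fun t => ?_⟩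
  have hbt := congrArg (algebraMap K ℂ) (hb t)
  rwa [Algebra.smul_def, map_mul] at hbt

/-- **Six Exponentials Theorem.** Let `x₁, …, x_d` and `y₁, …, y_ℓ` be complex
numbers, each family linearly independent over `ℚ`, with `dℓ > d + ℓ`. Then at
least one of the numbers `e^{x_i y_j}` is transcendental. -/
theorem six_exponentials_theorem
    (d ℓ : ℕ) (hd : 0 < d) (hl : 0 < ℓ) (h : d + ℓ < d * ℓ)
    (x : Fin d → ℂ) (hx : LinearIndependent ℚ x)
    (y : Fin ℓ → ℂ) (hy : LinearIndependent ℚ y) :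
    ∃ (i : Fin d) (j : Fin ℓ), Transcendental ℚ (Complex.exp (x i * y j)) := by
  by_contra! halg
  simp only [Transcendental, not_not] at halg
  obtain ⟨K, _, _, σ, D, b, hD, hb⟩ := exists_embedding_eq_mul_of_isAlgebraic
    fun t : Fin d × Fin ℓ => halg t.1 t.2
  exact not_forall_embedding_eq_mul_cexp (by simpa using h) hx hy hD hb
end

section
/- Let n ≥ 1, let σ = (σ_1, …, σ_n) and τ = (τ_1, …, τ_n) be n-tuples of nonnegative integers, and let s = (s_1, …, s_n) and t = (t_1, …, t_n) be n-tuples of complex numbers. Then D^σ(z ↦ z^τ e^{⟨t, z⟩}) evaluated at s equals D^τ(z ↦ z^σ e^{⟨s, z⟩}) evaluated at t; here both sides are complex numbers. -/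
/-- The partial derivative `∂/∂z_i` of a function on `ℂ^n`. -/
noncomputable def partialDerivC (n : ℕ) (i : Fin n) (f : (Fin n → ℂ) → ℂ) :
    (Fin n → ℂ) → ℂ :=
  fun z => fderiv ℂ f z (Pi.single i 1)

/-- The partial differential operator
`D^σ = (∂/∂z_1)^{σ_1} ⋯ (∂/∂z_n)^{σ_n}`. -/
noncomputable def Dpow (n : ℕ) (σ : Fin n → ℕ) (f : (Fin n → ℂ) → ℂ) :
    (Fin n → ℂ) → ℂ :=
  (List.finRange n).foldr (fun i g => (partialDerivC n i)^[σ i] g) f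

/-! Both `z^τ` and `e^{⟨t, z⟩}` are products of functions of the separate coordinates, and `D^σ`
differentiates the `i`-th factor `σ_i` times. This reduces the claim to one variable, where the
Leibniz rule gives `∑ k, k! (a choose k) (b choose k) s^(b-k) t^(a-k) e^{ts}` for the
`a`-th derivative of `z^b e^{tz}` at `s`: an expression invariant under exchanging `(a, s)` and
`(b, t)`. -/

open Finset

theorem fderiv_prod_apply_single {ι 𝕜 A : Type*} [Fintype ι] [DecidableEq ι]
    [NontriviallyNormedField 𝕜] [NormedCommRing A] [NormedAlgebra 𝕜 A] {g : ι → 𝕜 → A} {z : ι → 𝕜}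
    (hg : ∀ j, DifferentiableAt 𝕜 (g j) (z j)) (i : ι) :
    fderiv 𝕜 (fun w : ι → 𝕜 => ∏ j, g j (w j)) z (Pi.single i 1) =
      (∏ j ∈ univ.erase i, g j (z j)) * deriv (g i) (z i) := by
  have hasFDerivAt_factor (j : ι) :
      HasFDerivAt (fun w : ι → 𝕜 => g j (w j))
        ((ContinuousLinearMap.toSpanSingleton 𝕜 (deriv (g j) (z j))).comp
          (ContinuousLinearMap.proj j)) z :=
    (hg j).hasDerivAt.hasFDerivAt.comp z (hasFDerivAt_apply j z)
  rw [(HasFDerivAt.finsetProd fun j _ => hasFDerivAt_factor j).fderiv]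
  simp [Pi.single_apply]

section SeparatedVariables

variable {n : ℕ} {g : Fin n → ℂ → ℂ}

theorem partialDerivC_prod_iteratedDeriv (hg : ∀ j, Differentiable ℂ (g j)) (m : Fin n → ℕ)
    (i : Fin n) :
    partialDerivC n i (fun z => ∏ j, iteratedDeriv (m j) (g j) (z j)) =
      fun z => ∏ j, iteratedDeriv ((m + Pi.single i 1 : Fin n → ℕ) j) (g j) (z j) := by
  have differentiable_factor (j : Fin n) : Differentiable ℂ (iteratedDeriv (m j) (g j)) :=
    (hg j).contDiff.differentiable_iteratedDeriv (m j) (WithTop.coe_lt_top _)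
  funext z
  rw [partialDerivC, fderiv_prod_apply_single (fun j => differentiable_factor j (z j)),
    ← prod_erase_mul univ _ (mem_univ i)]
  congr 1
  · refine prod_congr rfl fun j hj => ?_
    simp [ne_of_mem_erase hj]
  · simp [iteratedDeriv_succ]

theorem iterate_partialDerivC_prod_iteratedDeriv (hg : ∀ j, Differentiable ℂ (g j))
    (m : Fin n → ℕ) (i : Fin n) (k : ℕ) :
    (partialDerivC n i)^[k] (fun z => ∏ j, iteratedDeriv (m j) (g j) (z j)) =
      fun z => ∏ j, iteratedDeriv ((m + Pi.single i k : Fin n → ℕ) j) (g j) (z j) := by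
  induction k with
  | zero => simp
  | succ k ih =>
    rw [Function.iterate_succ_apply', ih, partialDerivC_prod_iteratedDeriv hg, add_assoc,
      ← Pi.single_add]

theorem foldr_iterate_partialDerivC_prod (hg : ∀ j, Differentiable ℂ (g j)) (σ : Fin n → ℕ)
    (l : List (Fin n)) :
    l.foldr (fun i f => (partialDerivC n i)^[σ i] f) (fun z => ∏ j, g j (z j)) =
      fun z => ∏ j, iteratedDeriv ((l.map fun i => Pi.single i (σ i)).sum j) (g j) (z j) := by
  induction l with
  | nil => simp
  | cons i l ih =>
    rw [List.foldr_cons, ih, iterate_partialDerivC_prod_iteratedDeriv hg, List.map_cons,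
      List.sum_cons, add_comm]

theorem Dpow_prod (hg : ∀ j, Differentiable ℂ (g j)) (σ : Fin n → ℕ) :
    Dpow n σ (fun z => ∏ j, g j (z j)) = fun z => ∏ j, iteratedDeriv (σ j) (g j) (z j) := by
  have sum_single : ((List.finRange n).map fun i => Pi.single i (σ i)).sum = σ := by
    rw [← Fin.sum_univ_def, univ_sum_single]
  rw [Dpow, foldr_iterate_partialDerivC_prod hg, sum_single]

end SeparatedVariables

theorem Dpow_monomial_mul_cexp {n : ℕ} (σ τ : Fin n → ℕ) (s t : Fin n → ℂ) :
    Dpow n σ (fun z => (∏ i, z i ^ τ i) * Complex.exp (∑ i, t i * z i)) s =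
      ∏ i, iteratedDeriv (σ i) (fun w => w ^ τ i * Complex.exp (t i * w)) (s i) := by
  simp_rw [Complex.exp_sum, ← prod_mul_distrib]
  exact congrFun (Dpow_prod (g := fun i w => w ^ τ i * Complex.exp (t i * w))
    (fun _ => by fun_prop) σ) s

theorem iteratedDeriv_pow_mul_cexp (a b : ℕ) (s t : ℂ) :
    iteratedDeriv a (fun z => z ^ b * Complex.exp (t * z)) s =
      ∑ k ∈ range (min a b + 1),
        (k.factorial * a.choose k * b.choose k : ℂ) * s ^ (b - k) * t ^ (a - k) *
          Complex.exp (t * s) := by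
  have leibniz : iteratedDeriv a (fun z => z ^ b * Complex.exp (t * z)) s =
      ∑ k ∈ range (a + 1), a.choose k * iteratedDeriv k (fun z => z ^ b) s *
        iteratedDeriv (a - k) (fun z => Complex.exp (t * z)) s :=
    iteratedDeriv_fun_mul (by fun_prop) (by fun_prop)
  have range_subset : range (min a b + 1) ⊆ range (a + 1) := range_mono (by lia)
  rw [leibniz, sum_subset range_subset]
  · refine sum_congr rfl fun k _ => ?_
    rw [iteratedDeriv_pow, iteratedDeriv_cexp_const_mul, Nat.descFactorial_eq_factorial_mul_choose]
    push_cast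
    ring
  · intro k hka hk
    have hbk : b < k := by grind
    simp [Nat.choose_eq_zero_of_lt hbk]

theorem iteratedDeriv_pow_mul_cexp_comm (a b : ℕ) (s t : ℂ) :
    iteratedDeriv a (fun z => z ^ b * Complex.exp (t * z)) s =
      iteratedDeriv b (fun z => z ^ a * Complex.exp (s * z)) t := by
  rw [iteratedDeriv_pow_mul_cexp, iteratedDeriv_pow_mul_cexp, min_comm, mul_comm t s]
  exact sum_congr rfl fun k _ => by ring

/-- **Fourier–Borel duality.** For multi-indices `σ, τ ∈ ℤ_{≥0}^n` and points
`s, t ∈ ℂ^n`,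
`D^σ (z ↦ z^τ e^{⟨t,z⟩}) (s) = D^τ (z ↦ z^σ e^{⟨s,z⟩}) (t)`. -/
theorem fourier_borel_duality
    (n : ℕ) (hn : 1 ≤ n)
    (σ τ : Fin n → ℕ) (s t : Fin n → ℂ) :
    Dpow n σ (fun z => (∏ i, z i ^ τ i) * Complex.exp (∑ i, t i * z i)) s =
    Dpow n τ (fun z => (∏ i, z i ^ σ i) * Complex.exp (∑ i, s i * z i)) t := by
  rw [Dpow_monomial_mul_cexp, Dpow_monomial_mul_cexp]
  exact prod_congr rfl fun i _ => iteratedDeriv_pow_mul_cexp_comm (σ i) (τ i) (s i) (t i)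
end

section
/- Let A be a countable subset of ℂ and, for each pair (α, s) with α ∈ A and s a nonnegative integer, let E_{α,s} be a dense subset of ℂ. Then there exists a transcendental entire function f such that the s-th derivative f^{(s)}(α) belongs to E_{α,s} for every α ∈ A and every nonnegative integer s. -/
/-- A transcendental entire function: an entire function `ℂ → ℂ` which is not a
polynomial. -/
def IsTranscendentalEntire (f : ℂ → ℂ) : Prop :=
  Differentiable ℂ f ∧ ¬ ∃ p : Polynomial ℂ, ∀ z, f z = Polynomial.eval z p

/-!
Enumerate `A` as a sequence `a` that visits each of its points infinitely often, and look for `f`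
as a Newton series `∑ n, c n * ∏ k < n, (z - a k)`. If `a n` is the `s`-th visit to `α` (counting
from zero), then the `n`-th Newton polynomial vanishes to order exactly `s` at `α`, and all later
ones vanish to higher order. So `f^{(s)}(α)` is determined once `c n` is chosen, as a nonconstant
affine function of `c n`, and density lets `c n` be chosen arbitrarily small with
`f^{(s)}(α) ∈ E α s`. Small enough coefficients make the series converge locally uniformly.
Removing `0` from every `E α s` makes all derivatives of `f` at a point of `A` nonzero, which
excludes polynomials.
-/

section NewtonSum

open Polynomial Lagrange Finset

variable {R : Type*} [CommRing R]

theorem rootMultiplicity_nodal {ι : Type*} [IsDomain R] [DecidableEq R]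
    (s : Finset ι) (v : ι → R) (x : R) :
    (nodal s v).rootMultiplicity x = #{i ∈ s | v i = x} := by
  have roots_nodal : (nodal s v).roots = s.val.map v := by
    rw [nodal_eq, ← roots_multiset_prod_X_sub_C (s.val.map v), Multiset.map_map]
    rfl
  rw [← count_roots, roots_nodal, Multiset.count_map]
  simp only [eq_comm, Finset.card_def, Finset.filter_val]

theorem rootMultiplicity_nodal_range [IsDomain R] [DecidableEq R] (a : ℕ → R) (n : ℕ)
    (x : R) : (nodal (range n) a).rootMultiplicity x = Nat.count (a · = x) n := by
  rw [rootMultiplicity_nodal, Nat.count_eq_card_filter_range]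

theorem eval_iterate_derivative_rootMultiplicity_ne_zero [IsDomain R] [CharZero R] {p : R[X]}
    (hp : p ≠ 0) (x : R) : (derivative^[p.rootMultiplicity x] p).eval x ≠ 0 := by
  rw [eval_iterate_derivative_rootMultiplicity]
  exact smul_ne_zero (Nat.factorial_ne_zero _)
    (eval_divByMonic_pow_rootMultiplicity_ne_zero x hp)

/-- The Newton form `∑ k < n, c k * ∏ j < k, (X - a j)` of a polynomial with nodes `a` and
coefficients `c`. The nodes may repeat, and every repetition raises the order of the derivative
which the corresponding coefficient controls. -/
noncomputable def newtonSum (a c : ℕ → R) (n : ℕ) : R[X] :=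
  ∑ k ∈ range n, C (c k) * nodal (range k) a

variable (a c : ℕ → R)

theorem eval_newtonSum (n : ℕ) (x : R) :
    (newtonSum a c n).eval x = ∑ k ∈ range n, c k * (nodal (range k) a).eval x := by
  simp [newtonSum, eval_finsetSum]

theorem eval_iterate_derivative_newtonSum_succ (s n : ℕ) (x : R) :
    (derivative^[s] (newtonSum a c (n + 1))).eval x =
      (derivative^[s] (newtonSum a c n)).eval x +
        c n * (derivative^[s] (nodal (range n) a)).eval x := by
  rw [newtonSum, sum_range_succ, ← newtonSum, iterate_map_add, iterate_derivative_C_mul, eval_add,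
    eval_C_mul]

variable {a}

theorem eval_iterate_derivative_newtonSum_eq_of_le [IsDomain R] [DecidableEq R] {s m n : ℕ} {x : R}
    (hs : s < Nat.count (a · = x) m) (hmn : m ≤ n) :
    (derivative^[s] (newtonSum a c n)).eval x = (derivative^[s] (newtonSum a c m)).eval x := by
  induction n, hmn using Nat.le_induction with
  | base => rfl
  | succ n hmn ih =>
    have hroot : (derivative^[s] (nodal (range n) a)).IsRoot x := by
      apply isRoot_iterate_derivative_of_lt_rootMultiplicity
      rw [rootMultiplicity_nodal_range]
      exact hs.trans_le (Nat.count_monotone _ hmn)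
    rw [eval_iterate_derivative_newtonSum_succ, hroot.eq_zero, mul_zero, add_zero, ih]

end NewtonSum

section Coefficients

open Polynomial Lagrange Finset Filter Topology

theorem eventually_forall_norm_mul_le {X R : Type*} [TopologicalSpace X] [SeminormedRing R]
    {K : Set X} (hK : IsCompact K) {g : X → R} (hg : Continuous g) {ε : ℝ} (hε : 0 < ε) :
    ∀ᶠ c in 𝓝 (0 : R), ∀ x ∈ K, ‖c * g x‖ ≤ ε := by
  refine hK.eventually_forall_of_forall_eventually fun x _ => ?_
  have hcont : Continuous fun q : R × X => ‖q.1 * g q.2‖ := by fun_prop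
  exact (hcont.tendsto (0, x)).eventually_le_const (by simpa using hε)

theorem frequently_add_mul_mem_of_dense {𝕜 : Type*} [DivisionRing 𝕜] [TopologicalSpace 𝕜]
    [IsTopologicalRing 𝕜] {E : Set 𝕜} (hE : Dense E) (w : 𝕜) {v : 𝕜} (hv : v ≠ 0) (x : 𝕜) :
    ∃ᶠ c in 𝓝 x, w + c * v ∈ E := by
  have hopen : IsOpenMap fun c => w + c * v :=
    ((Homeomorph.mulRight₀ v hv).trans (Homeomorph.addLeft w)).isOpenMap
  exact mem_closure_iff_frequently.mp (hE.preimage hopen x)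

theorem exists_seq_forall_sum_range {ι M : Type*} [AddCommMonoid M] (g : ℕ → ι → M)
    {Q : ℕ → M → ι → Prop} (h : ∀ n S, ∃ i, Q n S i) :
    ∃ c : ℕ → ι, ∀ n, Q n (∑ k ∈ range n, g k (c k)) (c n) := by
  choose next hnext using h
  let S : ℕ → M := fun n => Nat.rec 0 (fun k T => T + g k (next k T)) n
  have hS (n : ℕ) : S n = ∑ k ∈ range n, g k (next k (S k)) := by
    induction n with
    | zero => rfl
    | succ n ih => rw [sum_range_succ, ← ih]
  exact ⟨fun n => next n (S n), fun n => hS n ▸ hnext n (S n)⟩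

theorem exists_newtonSum_coeff {𝕜 : Type*} [NormedField 𝕜] [CharZero 𝕜] [DecidableEq 𝕜]
    (a : ℕ → 𝕜) {K : ℕ → Set 𝕜} (hK : ∀ n, IsCompact (K n)) {ε : ℕ → ℝ} (hε : ∀ n, 0 < ε n)
    {E : ℕ → Set 𝕜} (hE : ∀ n, Dense (E n)) :
    ∃ c : ℕ → 𝕜, ∀ n, (∀ z ∈ K n, ‖c n * (nodal (range n) a).eval z‖ ≤ ε n) ∧
      (derivative^[Nat.count (a · = a n) n] (newtonSum a c (n + 1))).eval (a n) ∈ E n := by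
  simp only [eval_iterate_derivative_newtonSum_succ]
  refine exists_seq_forall_sum_range (fun k c => C c * nodal (range k) a)
    (Q := fun n S c => (∀ z ∈ K n, ‖c * (nodal (range n) a).eval z‖ ≤ ε n) ∧
      (derivative^[Nat.count (a · = a n) n] S).eval (a n) +
        c * (derivative^[Nat.count (a · = a n) n] (nodal (range n) a)).eval (a n) ∈ E n)
    fun n S => ?_
  have hne : (derivative^[Nat.count (a · = a n) n] (nodal (range n) a)).eval (a n) ≠ 0 := by
    rw [← rootMultiplicity_nodal_range]
    exact eval_iterate_derivative_rootMultiplicity_ne_zero nodal_ne_zero _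
  have hsmall := eventually_forall_norm_mul_le (hK n) (nodal (range n) a).continuous (hε n)
  exact (hsmall.and_frequently (frequently_add_mul_mem_of_dense (hE n) _ hne 0)).exists

end Coefficients

section Limits

open Filter Topology

theorem tendstoLocallyUniformly_tsum_of_norm_le_on_closedBall {V W : Type*}
    [SeminormedAddCommGroup V] [NormedAddCommGroup W] [CompleteSpace W] {F : ℕ → V → W} {u : ℕ → ℝ}
    (hu : Summable u) (hF : ∀ n : ℕ, ∀ z ∈ Metric.closedBall 0 (n : ℝ), ‖F n z‖ ≤ u n) :
    TendstoLocallyUniformly (fun N z => ∑ n ∈ Finset.range N, F n z) (fun z => ∑' n, F n z)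
      atTop := by
  have huniform (R : ℝ) : TendstoUniformlyOn (fun N z => ∑ n ∈ Finset.range N, F n z)
      (fun z => ∑' n, F n z) atTop (Metric.ball 0 R) := by
    refine tendstoUniformlyOn_tsum_nat_eventually hu ?_
    filter_upwards [eventually_ge_atTop ⌈R⌉₊] with n hn z hz
    exact hF n z (Metric.ball_subset_closedBall (Metric.ball_subset_ball (Nat.ceil_le.mp hn) hz))
  intro U hU x
  exact ⟨Metric.ball 0 (‖x‖ + 1), Metric.isOpen_ball.mem_nhds (by simp), huniform _ U hU⟩

theorem tendstoLocallyUniformlyOn_iteratedDeriv {ι V : Type*} [NormedAddCommGroup V]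
    [NormedSpace ℂ V] [CompleteSpace V] {φ : Filter ι} {U : Set ℂ} {F : ι → ℂ → V} {f : ℂ → V}
    (hf : TendstoLocallyUniformlyOn F f φ U) (hF : ∀ᶠ n in φ, DifferentiableOn ℂ (F n) U)
    (hU : IsOpen U) (k : ℕ) :
    TendstoLocallyUniformlyOn (fun n => iteratedDeriv k (F n)) (iteratedDeriv k f) φ U := by
  induction k generalizing F f with
  | zero => simpa only [iteratedDeriv_zero] using hf
  | succ k ih =>
    simp only [iteratedDeriv_succ']
    exact ih (hf.deriv hF hU) (hF.mono fun n hn => hn.deriv hU)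

theorem iteratedDeriv_polynomial_eval {𝕜 : Type*} [NontriviallyNormedField 𝕜]
    (p : Polynomial 𝕜) (k : ℕ) (x : 𝕜) :
    iteratedDeriv k (fun z => p.eval z) x = (Polynomial.derivative^[k] p).eval x := by
  induction k generalizing x with
  | zero => simp
  | succ k ih =>
    rw [iteratedDeriv_succ, funext ih, Polynomial.deriv, Function.iterate_succ_apply']

theorem isTranscendentalEntire_of_frequently_iteratedDeriv_ne_zero {f : ℂ → ℂ}
    (hf : Differentiable ℂ f) {α : ℂ} (hα : ∃ᶠ s in atTop, iteratedDeriv s f α ≠ 0) :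
    IsTranscendentalEntire f := by
  refine ⟨hf, ?_⟩
  rintro ⟨p, hp⟩
  obtain ⟨s, hdegree, hs⟩ := frequently_atTop.mp hα (p.natDegree + 1)
  apply hs
  rw [funext hp, iteratedDeriv_polynomial_eval, Polynomial.iterate_derivative_eq_zero hdegree,
    Polynomial.eval_zero]

end Limits

section Interpolation

open Polynomial Lagrange Filter Topology

theorem exists_differentiable_forall_iteratedDeriv_count_mem (a : ℕ → ℂ) {E : ℕ → Set ℂ}
    (hE : ∀ n, Dense (E n)) :
    ∃ f : ℂ → ℂ, Differentiable ℂ f ∧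
      ∀ n, iteratedDeriv (Nat.count (a · = a n) n) f (a n) ∈ E n := by
  obtain ⟨c, hc⟩ := exists_newtonSum_coeff a (K := fun n => Metric.closedBall 0 n)
    (ε := fun n => (1 / 2) ^ n) (fun n => isCompact_closedBall 0 _) (fun n => by positivity) hE
  let f : ℂ → ℂ := fun z => ∑' n, c n * (nodal (Finset.range n) a).eval z
  have hlim : TendstoLocallyUniformlyOn (fun n z => (newtonSum a c n).eval z) f atTop .univ := by
    simp only [eval_newtonSum]
    exact (tendstoLocallyUniformly_tsum_of_norm_le_on_closedBall summable_geometric_two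
      fun n => (hc n).1).tendstoLocallyUniformlyOn
  have hdiff : ∀ᶠ n in atTop, DifferentiableOn ℂ (fun z => (newtonSum a c n).eval z) .univ :=
    .of_forall fun n => (newtonSum a c n).differentiableOn
  refine ⟨f, differentiableOn_univ.mp (hlim.differentiableOn hdiff isOpen_univ), fun n => ?_⟩
  set s := Nat.count (a · = a n) n
  have hderiv : Tendsto (fun N => (derivative^[s] (newtonSum a c N)).eval (a n)) atTop
      (𝓝 (iteratedDeriv s f (a n))) := by
    simpa only [iteratedDeriv_polynomial_eval] using
      (tendstoLocallyUniformlyOn_iteratedDeriv hlim hdiff isOpen_univ s).tendsto_at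
        (Set.mem_univ (a n))
  have hs : s < Nat.count (a · = a n) (n + 1) := Nat.count_lt_count_succ_iff.mpr rfl
  have hstable : Tendsto (fun N => (derivative^[s] (newtonSum a c N)).eval (a n)) atTop
      (𝓝 ((derivative^[s] (newtonSum a c (n + 1))).eval (a n))) :=
    tendsto_atTop_of_eventually_const fun _ => eval_iterate_derivative_newtonSum_eq_of_le c hs
  rw [tendsto_nhds_unique hderiv hstable]
  exact (hc n).2

theorem exists_seq_mem_and_forall_infinite_fiber {X : Type*} {A : Set X} (hA : A.Countable)
    (hne : A.Nonempty) :
    ∃ a : ℕ → X, (∀ n, a n ∈ A) ∧ ∀ x ∈ A, {n | a n = x}.Infinite := by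
  obtain ⟨g, rfl⟩ := hA.exists_eq_range hne
  refine ⟨fun n => g n.unpair.1, fun n => Set.mem_range_self _, ?_⟩
  rintro _ ⟨k, rfl⟩
  exact Set.infinite_of_injective_forall_mem (f := Nat.pair k) (fun m m' h => by simpa using h)
    fun m => by simp

theorem exists_differentiable_forall_iteratedDeriv_mem {A : Set ℂ} (hA : A.Countable)
    (hne : A.Nonempty) {E : ℂ → ℕ → Set ℂ} (hE : ∀ α ∈ A, ∀ s, Dense (E α s)) :
    ∃ f : ℂ → ℂ, Differentiable ℂ f ∧ ∀ α ∈ A, ∀ s, iteratedDeriv s f α ∈ E α s := by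
  obtain ⟨a, haA, hfiber⟩ := exists_seq_mem_and_forall_infinite_fiber hA hne
  obtain ⟨f, hf, hmem⟩ := exists_differentiable_forall_iteratedDeriv_count_mem a
    (E := fun n => E (a n) (Nat.count (a · = a n) n)) fun n => hE _ (haA n) _
  refine ⟨f, hf, fun α hα s => ?_⟩
  obtain ⟨n, rfl, rfl⟩ : ∃ n, a n = α ∧ Nat.count (a · = α) n = s :=
    ⟨Nat.nth (a · = α) s, Nat.nth_mem_of_infinite (hfiber α hα) s,
      Nat.count_nth_of_infinite (hfiber α hα) s⟩
  exact hmem n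

end Interpolation

/-- Let `A` be a countable subset of `ℂ` and, for each `α ∈ A` and nonnegative
integer `s`, let `E α s` be a dense subset of `ℂ`. Then there exists a
transcendental entire function `f` with `f^{(s)}(α) ∈ E α s` for all `α ∈ A` and
all `s ≥ 0`. -/
theorem exists_transcendental_entire_with_prescribed_derivatives
    (A : Set ℂ) (hA : A.Countable)
    (E : ℂ → ℕ → Set ℂ) (hE : ∀ α ∈ A, ∀ s : ℕ, Dense (E α s)) :
    ∃ f : ℂ → ℂ, IsTranscendentalEntire f ∧
      ∀ α ∈ A, ∀ s : ℕ, iteratedDeriv s f α ∈ E α s := by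
  rcases A.eq_empty_or_nonempty with rfl | ⟨α, hα⟩
  · refine ⟨Complex.exp, isTranscendentalEntire_of_frequently_iteratedDeriv_ne_zero
      Complex.differentiable_exp (α := 0) (.of_forall fun s => ?_), by simp⟩
    simp [iteratedDeriv_eq_iterate]
  · obtain ⟨f, hf, hmem⟩ := exists_differentiable_forall_iteratedDeriv_mem hA ⟨α, hα⟩
      (E := fun α s => E α s \ {0}) fun α hα s => (hE α hα s).sdiff_singleton 0
    exact ⟨f, isTranscendentalEntire_of_frequently_iteratedDeriv_ne_zero hf
      (.of_forall fun s => (hmem α hα s).2), fun α hα s => (hmem α hα s).1⟩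
end

section
/- Let S be any subset of the set of algebraic complex numbers. Then there exists a transcendental entire function f whose exceptional set equals S; that is, for every algebraic number α one has f(α) algebraic if and only if α ∈ S. -/
/-!
Enumerate the algebraic numbers as `a 0, a 1, …` and look for `f` as a Newton series
`∑ d n * (z - a 0) ⋯ (z - a (n - 1))`. The value `f (a n)` depends only on `d 0, …, d n`, and it is
an affine function of `d n` with nonzero slope. Both the algebraic and the transcendental numbers
are dense in `ℂ`, so the `d n` can be chosen one after the other, nonzero and so small that the
series converges locally uniformly, with each `f (a n)` in the prescribed class. Since no `d n`
vanishes, `f` is not a polynomial: a polynomial is determined by its values at the nodes and has a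
finite Newton expansion.
-/

open Finset Polynomial Lagrange

section NewtonPartialSum

variable {R : Type*} [CommRing R]

/-- The polynomial `∑ k < n, d k * ∏ i < k, (X - a i)`: the Newton interpolation polynomial with
nodes `a` and coefficients `d`, truncated to its first `n` terms. -/
noncomputable def newtonPartialSum (a d : ℕ → R) (n : ℕ) : R[X] :=
  ∑ k ∈ range n, C (d k) * nodal (range k) a

theorem newtonPartialSum_succ (a d : ℕ → R) (n : ℕ) :
    newtonPartialSum a d (n + 1) = newtonPartialSum a d n + C (d n) * nodal (range n) a :=
  sum_range_succ _ n

theorem eval_newtonPartialSum (a d : ℕ → R) (n : ℕ) (x : R) :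
    (newtonPartialSum a d n).eval x = ∑ k ∈ range n, d k * (nodal (range k) a).eval x := by
  simp [newtonPartialSum, eval_finsetSum]

theorem degree_newtonPartialSum_lt [Nontrivial R] (a d : ℕ → R) (n : ℕ) :
    (newtonPartialSum a d n).degree < n := by
  refine mem_degreeLT.mp (Submodule.sum_mem _ fun k hk ↦ mem_degreeLT.mpr ?_)
  calc (C (d k) * nodal (range k) a).degree
    _ ≤ (nodal (range k) a).degree := by
      simpa only [smul_eq_C_mul] using degree_smul_le (d k) (nodal (range k) a)
    _ = k := by rw [degree_nodal, card_range]
    _ < n := mod_cast mem_range.mp hk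

theorem exists_forall_newtonPartialSum (a : ℕ → R) {P : ℕ → R[X] → R → Prop}
    (hP : ∀ n q, ∃ c, P n q c) : ∃ d : ℕ → R, ∀ n, P n (newtonPartialSum a d n) (d n) := by
  choose c hc using hP
  let p : ℕ → R[X] := Nat.rec 0 fun n q ↦ q + C (c n q) * nodal (range n) a
  have p_eq (n : ℕ) : newtonPartialSum a (fun k ↦ c k (p k)) n = p n := by
    induction n with
    | zero => rfl
    | succ n ih => rw [newtonPartialSum_succ, ih]
  exact ⟨fun n ↦ c n (p n), fun n ↦ by simpa only [p_eq] using hc n (p n)⟩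

variable [IsDomain R] {a : ℕ → R}

theorem eval_nodal_range_self_ne_zero (ha : a.Injective) (n : ℕ) :
    (nodal (range n) a).eval (a n) ≠ 0 :=
  eval_nodal_not_at_node fun _ hi ↦ ha.ne (mem_range.mp hi).ne'

theorem newtonPartialSum_eq_of_eval_eq (ha : a.Injective) {d : ℕ → R} {q : R[X]} {n : ℕ}
    (hn : q.natDegree < n) (h : ∀ i < n, (newtonPartialSum a d n).eval (a i) = q.eval (a i)) :
    newtonPartialSum a d n = q := by
  refine eq_of_degrees_lt_of_eval_index_eq (range n) ha.injOn ?_ ?_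
    fun i hi ↦ h i (mem_range.mp hi)
  · simpa only [card_range] using degree_newtonPartialSum_lt a d n
  · simpa only [card_range] using degree_le_natDegree.trans_lt (Nat.cast_lt.mpr hn)

theorem newton_coeff_eq_zero_of_eval_eq (ha : a.Injective) {d : ℕ → R} {q : R[X]}
    (h : ∀ n, ∀ i < n, (newtonPartialSum a d n).eval (a i) = q.eval (a i))
    {n : ℕ} (hn : q.natDegree < n) : d n = 0 := by
  have hsucc := newtonPartialSum_succ a d n
  rw [newtonPartialSum_eq_of_eval_eq ha hn (h n),
    newtonPartialSum_eq_of_eval_eq ha (hn.trans n.lt_succ_self) (h (n + 1)),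
    left_eq_add, mul_eq_zero, C_eq_zero] at hsucc
  exact hsucc.resolve_right nodal_ne_zero

end NewtonPartialSum

section NewtonSeries

/-- The Newton series `∑ d n * ∏ i < n, (x - a i)` with nodes `a` and coefficients `d`, as a
function of `x`; it takes the value `0` where the series is not summable. -/
noncomputable def newtonSeries {R : Type*} [CommRing R] [TopologicalSpace R] (a d : ℕ → R) (x : R) :
    R :=
  ∑' n, d n * (nodal (range n) a).eval x

theorem newtonSeries_node {R : Type*} [CommRing R] [TopologicalSpace R] (a d : ℕ → R) {i n : ℕ}
    (hi : i < n) : newtonSeries a d (a i) = (newtonPartialSum a d n).eval (a i) := by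
  rw [eval_newtonPartialSum]
  refine tsum_eq_sum fun k hk ↦ ?_
  have hik : i < k := hi.trans_le (by simpa using hk)
  rw [eval_nodal_at_node (mem_range.mpr hik), mul_zero]

theorem norm_eval_nodal_le {𝕜 ι : Type*} [NormedField 𝕜] (s : Finset ι) (a : ι → 𝕜) (z : 𝕜) :
    ‖(nodal s a).eval z‖ ≤ (1 + ‖z‖) ^ #s * ∏ i ∈ s, (1 + ‖a i‖) := by
  rw [eval_nodal, norm_prod, ← prod_const, ← prod_mul_distrib]
  refine prod_le_prod (fun _ _ ↦ norm_nonneg _) fun i _ ↦ ?_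
  calc ‖z - a i‖ ≤ ‖z‖ + ‖a i‖ := norm_sub_le z (a i)
    _ ≤ (1 + ‖z‖) * (1 + ‖a i‖) := by
      linarith [mul_nonneg (norm_nonneg z) (norm_nonneg (a i))]

theorem norm_newton_term_le {𝕜 : Type*} [NormedField 𝕜] {a d : ℕ → 𝕜} {n : ℕ}
    (hd : ‖d n‖ ≤ (n.factorial * ∏ i ∈ range n, (1 + ‖a i‖))⁻¹) (z : 𝕜) :
    ‖d n * (nodal (range n) a).eval z‖ ≤ (1 + ‖z‖) ^ n / n.factorial := by
  have hprod : ∏ i ∈ range n, (1 + ‖a i‖) ≠ 0 := prod_ne_zero_iff.mpr fun i _ ↦ by positivity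
  calc ‖d n * (nodal (range n) a).eval z‖
    _ ≤ (n.factorial * ∏ i ∈ range n, (1 + ‖a i‖))⁻¹ *
        ((1 + ‖z‖) ^ n * ∏ i ∈ range n, (1 + ‖a i‖)) := by
      rw [norm_mul]
      gcongr
      simpa only [card_range] using norm_eval_nodal_le (range n) a z
    _ = (1 + ‖z‖) ^ n / n.factorial := by field_simp [hprod]

theorem differentiable_newtonSeries {a d : ℕ → ℂ}
    (hd : ∀ n, ‖d n‖ ≤ (n.factorial * ∏ i ∈ range n, (1 + ‖a i‖))⁻¹) :
    Differentiable ℂ (newtonSeries a d) := by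
  intro z
  have hball : DifferentiableOn ℂ (newtonSeries a d) (Metric.ball 0 (‖z‖ + 1)) := by
    refine Complex.differentiableOn_tsum_of_summable_norm
      (Real.summable_pow_div_factorial (1 + (‖z‖ + 1)))
      (fun n ↦ ((nodal (range n) a).differentiable.const_mul _).differentiableOn)
      Metric.isOpen_ball fun n w hw ↦ (norm_newton_term_le (hd n) w).trans ?_
    have hwz : ‖w‖ ≤ ‖z‖ + 1 := (mem_ball_zero_iff.mp hw).le
    gcongr
  exact hball.differentiableAt (Metric.isOpen_ball.mem_nhds (by simp))

theorem not_exists_polynomial_eq_newtonSeries {R : Type*} [CommRing R] [IsDomain R]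
    [TopologicalSpace R] {a d : ℕ → R} (ha : a.Injective) (hd : ∀ n, d n ≠ 0) :
    ¬ ∃ q : R[X], ∀ x, newtonSeries a d x = q.eval x := by
  rintro ⟨q, hq⟩
  refine hd (q.natDegree + 1) (newton_coeff_eq_zero_of_eval_eq ha (fun n i hi ↦ ?_)
    q.natDegree.lt_succ_self)
  rw [← newtonSeries_node a d hi, hq]

end NewtonSeries

section DenseTargets

theorem exists_ne_zero_norm_lt_add_mul_mem {𝕜 : Type*} [NontriviallyNormedField 𝕜] {T : Set 𝕜}
    (hT : Dense T) (v : 𝕜) {b : 𝕜} (hb : b ≠ 0) {r : ℝ} (hr : 0 < r) :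
    ∃ c : 𝕜, c ≠ 0 ∧ ‖c‖ < r ∧ v + c * b ∈ T := by
  let affine : 𝕜 ≃ₜ 𝕜 := (Homeomorph.mulRight₀ b hb).trans (Homeomorph.addLeft v)
  have hpreimage : Dense (affine ⁻¹' T) := hT.preimage affine.isOpenMap
  obtain ⟨c, ⟨hcT, hc⟩, hcr⟩ := (hpreimage.sdiff_singleton 0).exists_dist_lt 0 hr
  exact ⟨c, hc, by simpa using hcr, hcT⟩

theorem exists_newton_coeff_eval_mem {𝕜 : Type*} [NontriviallyNormedField 𝕜] {a : ℕ → 𝕜}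
    (ha : a.Injective) {T : ℕ → Set 𝕜} (hT : ∀ n, Dense (T n)) {r : ℕ → ℝ} (hr : ∀ n, 0 < r n) :
    ∃ d : ℕ → 𝕜, ∀ n, d n ≠ 0 ∧ ‖d n‖ < r n ∧
      (newtonPartialSum a d (n + 1)).eval (a n) ∈ T n := by
  simp only [newtonPartialSum_succ, eval_add, eval_mul, eval_C]
  exact exists_forall_newtonPartialSum a fun n q ↦ exists_ne_zero_norm_lt_add_mul_mem (hT n)
    (q.eval (a n)) (eval_nodal_range_self_ne_zero ha n) (hr n)

theorem exists_isTranscendentalEntire_seq_mem {a : ℕ → ℂ} (ha : a.Injective) {T : ℕ → Set ℂ}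
    (hT : ∀ n, Dense (T n)) : ∃ f, IsTranscendentalEntire f ∧ ∀ n, f (a n) ∈ T n := by
  have hradius (n : ℕ) : 0 < (n.factorial * ∏ i ∈ range n, (1 + ‖a i‖))⁻¹ :=
    inv_pos.mpr (mul_pos (by positivity) (prod_pos fun i _ ↦ by positivity))
  obtain ⟨d, hd⟩ := exists_newton_coeff_eval_mem ha hT hradius
  refine ⟨newtonSeries a d, ⟨differentiable_newtonSeries fun n ↦ (hd n).2.1.le,
    not_exists_polynomial_eq_newtonSeries ha fun n ↦ (hd n).1⟩, fun n ↦ ?_⟩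
  rw [newtonSeries_node a d n.lt_succ_self]
  exact (hd n).2.2

theorem exists_isTranscendentalEntire_mem_of_countable {A : Set ℂ} (hA : A.Countable)
    {T : ℂ → Set ℂ} (hT : ∀ α ∈ A, Dense (T α)) :
    ∃ f, IsTranscendentalEntire f ∧ ∀ α ∈ A, f α ∈ T α := by
  -- The natural numbers are added as unconstrained nodes, in case `A` is finite.
  let B : Set ℂ := A ∪ Set.range Nat.cast
  have hB : B.Countable := hA.union (Set.countable_range _)
  have hB_inf : B.Infinite :=
    (Set.infinite_range_of_injective Nat.cast_injective).mono Set.subset_union_right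
  obtain ⟨_⟩ := Set.countable_infinite_iff_nonempty_denumerable.mp ⟨hB, hB_inf⟩
  let e : ℕ ≃ B := (Denumerable.eqv B).symm
  have hT' (n : ℕ) : Dense {w | (e n : ℂ) ∈ A → w ∈ T (e n)} := by
    by_cases hn : (e n : ℂ) ∈ A
    · simpa [hn] using hT _ hn
    · simp [hn]
  obtain ⟨f, hf, hfT⟩ :=
    exists_isTranscendentalEntire_seq_mem (Subtype.val_injective.comp e.injective) hT'
  refine ⟨f, hf, fun α hα ↦ ?_⟩
  obtain ⟨n, hn⟩ := e.surjective ⟨α, Or.inl hα⟩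
  simpa [hn, hα] using hfT n

end DenseTargets

section AlgebraicNumbers

variable (K : Type*) [Field K] [Algebra K ℂ]

theorem dense_setOf_isAlgebraic_complex : Dense {z : ℂ | IsAlgebraic K z} := by
  let L : Subfield ℂ := (algebraicClosure K ℂ).toSubfield
  have hL : (L : Set ℂ) = {z | IsAlgebraic K z} := Set.ext fun _ ↦ mem_algebraicClosure_iff
  have hI : Complex.I ∈ L :=
    mem_algebraicClosure_iff.mpr (Complex.isIntegral_int_I.tower_top (A := K)).isAlgebraic
  have hnot_real : L.topologicalClosure ≠ Complex.ofRealHom.fieldRange := by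
    intro h
    obtain ⟨x, hx⟩ := h ▸ L.le_topologicalClosure hI
    simpa using congrArg Complex.im hx
  have htop : L.topologicalClosure = ⊤ :=
    (Complex.subfield_eq_of_closed L.isClosed_topologicalClosure).resolve_left hnot_real
  rw [← hL, dense_iff_closure_eq]
  exact congrArg SetLike.coe htop

theorem dense_setOf_transcendental_complex [Countable K] : Dense {z : ℂ | Transcendental K z} :=
  (Algebraic.countable K ℂ).dense_compl ℝ

theorem dense_setOf_isAlgebraic_iff [Countable K] (p : Prop) :
    Dense {z : ℂ | IsAlgebraic K z ↔ p} := by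
  by_cases hp : p
  · simpa only [hp, iff_true] using dense_setOf_isAlgebraic_complex K
  · simpa only [hp, iff_false, Transcendental] using dense_setOf_transcendental_complex K

end AlgebraicNumbers

theorem exceptional_set_arbitrary_general (K : Type*) [Field K] [Countable K] [Algebra K ℂ]
    (S : Set ℂ) :
    ∃ f : ℂ → ℂ, IsTranscendentalEntire f ∧
      ∀ α : ℂ, IsAlgebraic K α → (IsAlgebraic K (f α) ↔ α ∈ S) :=
  exists_isTranscendentalEntire_mem_of_countable (Algebraic.countable K ℂ)
    fun α _ ↦ dense_setOf_isAlgebraic_iff K (α ∈ S)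

/-- **Any set of algebraic numbers is the exceptional set of some transcendental
entire function.** For any set `S` of algebraic numbers there is a transcendental
entire function `f` such that, for every algebraic `α`, `f(α)` is algebraic iff
`α ∈ S`. -/
theorem exceptional_set_arbitrary
    (S : Set ℂ) (hS : ∀ α ∈ S, IsAlgebraic ℚ α) :
    ∃ f : ℂ → ℂ, IsTranscendentalEntire f ∧
      ∀ α : ℂ, IsAlgebraic ℚ α → (IsAlgebraic ℚ (f α) ↔ α ∈ S) :=
  exceptional_set_arbitrary_general ℚ S
end
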